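/- For all integers d ≥ 1 and k ≥ 1 there exists a constant C = C(d,k) < ∞ such that for every real polynomial Q in d variables of total degree at most k, one has |∫_{[0,1]^d} e(Q(ξ)) dξ| ≤ C · sup_{μ ∈ ℝ} |{ξ ∈ [0,1]^d : μ ≤ Q(ξ) ≤ μ + 1}|. -/

import Mathlib

open MeasureTheory Real Set
open scoped ENNReal

namespace StationarySet

open Metric Topology Filter Polynomial ComplexConjugate

theorem isOpenEmbedding_of_section {E : Set (ℂ × ℂ)} {U : Set E} (hU : IsOpen U)
    (hinj : InjOn (fun x : E => x.1.1) U)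
    (hsec : ∀ x ∈ U, ∃ ψ : ℂ → ℂ, ContinuousAt ψ x.1.1 ∧ ψ x.1.1 = x.1.2 ∧
      ∀ᶠ τ in 𝓝 x.1.1, (τ, ψ τ) ∈ E) :
    IsOpenEmbedding (U.domRestrict (fun x : E => x.1.1)) := by
  refine IsOpenEmbedding.of_continuous_injective_isOpenMap (by fun_prop)
    (injOn_iff_injective.1 hinj) ?_
  have key : ∀ x ∈ U, 𝓝 x.1.1 ≤ map (fun x : E => x.1.1) (𝓝 x) := by
    intro x hx A hA
    obtain ⟨ψ, hψ, hψx, hψE⟩ := hsec x hx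
    rw [mem_map, nhds_subtype, mem_comap] at hA
    obtain ⟨B, hB, hBA⟩ := hA
    have hcont : ContinuousAt (fun τ => (τ, ψ τ)) x.1.1 := continuousAt_id.prodMk hψ
    have hB' : B ∈ 𝓝 ((fun τ => (τ, ψ τ)) x.1.1) := by simpa [hψx] using hB
    filter_upwards [hcont hB', hψE] with τ h1 h2
    exact hBA (show (⟨(τ, ψ τ), h2⟩ : E) ∈ _ from h1)
  rw [isOpenMap_iff_nhds_le]
  intro x A hA
  have h1 := key x.1 x.2
  have h2 : 𝓝 x.1 = map Subtype.val (𝓝 x) := (hU.isOpenEmbedding_subtypeVal.map_nhds_eq x).symm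
  rw [h2, map_map] at h1
  exact h1 hA

theorem exists_holomorphic_section {F : ℂ × ℂ → ℂ} {E : Set (ℂ × ℂ)} {r : ℝ} (hr : 0 < r)
    (hE : IsCompact E) (hE0 : ∀ x ∈ E, F x = 0)
    (hloc : ∀ x ∈ E, x.1 ∈ ball (0 : ℂ) r → ∀ᶠ y in 𝓝 x, F y = 0 → y ∈ E)
    (hdiff : ∀ x ∈ E, x.1 ∈ ball (0 : ℂ) r →
      ∃ F' : ℂ × ℂ →L[ℂ] ℂ, HasStrictFDerivAt F F' x ∧ F' (0, 1) ≠ 0)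
    {a : ℂ} (ha : (0, a) ∈ E) :
    ∃ θ : ℂ → ℂ, DifferentiableOn ℂ θ (ball 0 r) ∧ θ 0 = a ∧
      (∀ τ ∈ ball (0 : ℂ) r, (τ, θ τ) ∈ E) ∧
      ∀ θ' : ℂ → ℂ, ContinuousOn θ' (ball 0 r) → θ' 0 = a →
        (∀ τ ∈ ball (0 : ℂ) r, (τ, θ' τ) ∈ E) → EqOn θ' θ (ball 0 r) := by
  have himp : ∀ x ∈ E, x.1 ∈ ball (0 : ℂ) r → ∃ ψ : ℂ → ℂ, DifferentiableAt ℂ ψ x.1 ∧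
      ψ x.1 = x.2 ∧ (∀ᶠ y in 𝓝 x, F y = 0 → ψ y.1 = y.2) ∧ ∀ᶠ τ in 𝓝 x.1, (τ, ψ τ) ∈ E := by
    intro x hx hxr
    obtain ⟨F', hF', hne⟩ := hdiff x hx hxr
    have hinv : (F' ∘L .inr ℂ ℂ ℂ).IsInvertible := by
      refine ⟨ContinuousLinearEquiv.unitsEquivAut ℂ (Units.mk0 _ hne), ?_⟩
      ext
      simp
    have h1 := hF'.eventually_apply_eq_iff_implicitFunctionOfProdDomain hinv
    have h2 := hF'.hasStrictFDerivAt_implicitFunctionOfProdDomain hinv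
    have h3 := hF'.tendsto_implicitFunctionOfProdDomain hinv
    have h4 := hF'.eventually_apply_implicitFunctionOfProdDomain hinv
    have h5 := h1.self_of_nhds.1 rfl
    rw [hE0 x hx] at h1 h4
    refine ⟨_, h2.hasFDerivAt.differentiableAt, h5, h1.mono fun y hy => hy.1, ?_⟩
    have h6 : Tendsto (fun τ => (τ, hF'.implicitFunctionOfProdDomain hinv τ)) (𝓝 x.1) (𝓝 x) :=
      tendsto_id.prodMk_nhds h3
    filter_upwards [h6.eventually (hloc x hx hxr), h4] with τ h7 h8 using h7 h8
  let p : E → ℂ := fun x => x.1.1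
  have hp : Continuous p := by fun_prop
  have : CompactSpace E := isCompact_iff_compactSpace.1 hE
  have hcov : IsCoveringMapOn p (ball 0 r) := by
    refine IsCoveringMapOn.of_isLocalHomeomorphOn hp ?_
    rw [isLocalHomeomorphOn_iff_isOpenEmbedding_restrict]
    intro x hx
    obtain ⟨ψ, -, -, hψ, -⟩ := himp x.1 x.2 hx
    obtain ⟨W, hW, hWo, hxW⟩ := _root_.eventually_nhds_iff.1 hψ
    have hUo : IsOpen {y : E | y.1 ∈ W ∧ y.1.1 ∈ ball (0 : ℂ) r} :=
      (hWo.preimage continuous_subtype_val).inter (isOpen_ball.preimage hp)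
    refine ⟨_, hUo.mem_nhds ⟨hxW, hx⟩, isOpenEmbedding_of_section hUo ?_ ?_⟩
    · intro y hy z hz hyz
      have h1 := hW y hy.1 (hE0 _ y.2)
      have h2 := hW z hz.1 (hE0 _ z.2)
      have hyz' : y.1.1 = z.1.1 := hyz
      exact Subtype.ext (Prod.ext hyz' (by rw [← h1, ← h2, hyz']))
    · intro y hy
      obtain ⟨ψ', h1, h2, -, h3⟩ := himp y.1 y.2 hy.2
      exact ⟨ψ', h1.continuousAt, h2, h3⟩
  let A := ball (0 : ℂ) r
  have : ContractibleSpace A :=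
    (convex_ball (0 : ℂ) r).contractibleSpace ⟨0, mem_ball_self hr⟩
  have : LocallyPathConnectedSpace A := isOpen_ball.locallyPathConnectedSpace
  let a₀ : A := ⟨0, mem_ball_self hr⟩
  obtain ⟨G, ⟨hG0, hG⟩, huniq⟩ := hcov.existsUnique_continuousMap_lifts
    (⟨Subtype.val, by fun_prop⟩ : C(A, ℂ)) (a₀ := a₀) (e₀ := ⟨(0, a), ha⟩) rfl (fun x => x.2)
  have hG1 : ∀ τ (h : τ ∈ A), (G ⟨τ, h⟩).1.1 = τ := fun τ h => congrFun hG ⟨τ, h⟩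
  classical
  let θ : ℂ → ℂ := fun τ => if h : τ ∈ A then (G ⟨τ, h⟩).1.2 else 0
  have hθ : ∀ τ (h : τ ∈ A), θ τ = (G ⟨τ, h⟩).1.2 := fun τ h => dif_pos h
  have hθE : ∀ τ ∈ A, (τ, θ τ) ∈ E := by
    intro τ h
    have : (τ, θ τ) = (G ⟨τ, h⟩).1 := Prod.ext (hG1 τ h).symm (hθ τ h)
    rw [this]
    exact (G ⟨τ, h⟩).2
  have hθc : ContinuousOn θ A := by
    rw [continuousOn_iff_continuous_domRestrict]
    have : A.domRestrict θ = fun x => (G x).1.2 := by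
      ext x
      exact hθ x.1 x.2
    rw [this]
    fun_prop
  refine ⟨θ, ?_, ?_, hθE, ?_⟩
  · intro τ hτ
    have hca : ContinuousAt θ τ := hθc.continuousAt (isOpen_ball.mem_nhds hτ)
    obtain ⟨ψ, h1, h2, h3, -⟩ := himp (τ, θ τ) (hθE τ hτ) hτ
    have h4 : Tendsto (fun σ => (σ, θ σ)) (𝓝 τ) (𝓝 (τ, θ τ)) := tendsto_id.prodMk_nhds hca
    refine (h1.congr_of_eventuallyEq ?_).differentiableWithinAt
    filter_upwards [h4.eventually h3, isOpen_ball.mem_nhds hτ] with σ h5 h6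
    exact (h5 (hE0 _ (hθE σ h6))).symm
  · rw [hθ 0 (mem_ball_self hr)]
    have : G ⟨0, mem_ball_self hr⟩ = ⟨(0, a), ha⟩ := hG0
    rw [this]
  · intro θ' hc h0 hE' τ hτ
    have := huniq ⟨fun x => ⟨(x.1, θ' x.1), hE' _ x.2⟩, by
      have h1 : Continuous (fun x : A => θ' x.1) := continuousOn_iff_continuous_domRestrict.1 hc
      exact (continuous_subtype_val.prodMk h1).subtype_mk _⟩ ⟨Subtype.ext (Prod.ext rfl h0), rfl⟩
    rw [hθ τ hτ, ← this]
    rfl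

theorem sum_norm_coeff_prod_le (s : Multiset ℂ) {x : ℝ} (hx : 0 ≤ x) (N : ℕ) :
    ∑ l ∈ Finset.range N, ‖(s.map fun w => (X - C w : ℂ[X])).prod.coeff l‖ * x ^ l ≤
      (s.map fun w => x + ‖w‖).prod := by
  induction s using Multiset.induction_on generalizing N with
  | empty =>
    simp only [Multiset.map_zero, Multiset.prod_zero, coeff_one]
    rcases N with _ | N
    · simp
    · rw [Finset.sum_range_succ']
      simp
  | cons w s ih =>
    simp only [Multiset.map_cons, Multiset.prod_cons]
    set q := (s.map fun w => (X - C w : ℂ[X])).prod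
    have h1 : ∑ l ∈ Finset.range N, ‖(X * q).coeff l‖ * x ^ l ≤
        x * (s.map fun w => x + ‖w‖).prod := by
      rcases N with _ | N
      · simp only [Finset.range_zero, Finset.sum_empty]
        exact mul_nonneg hx ((Finset.sum_nonneg fun _ _ => by positivity).trans (ih 0))
      · rw [Finset.sum_range_succ']
        simp only [coeff_X_mul, coeff_X_mul_zero, norm_zero, zero_mul, add_zero]
        calc _ = x * ∑ l ∈ Finset.range N, ‖q.coeff l‖ * x ^ l := by
              rw [Finset.mul_sum]
              exact Finset.sum_congr rfl fun l _ => by ring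
          _ ≤ _ := mul_le_mul_of_nonneg_left (ih N) hx
    calc _ ≤ ∑ l ∈ Finset.range N, (‖(X * q).coeff l‖ * x ^ l + ‖w‖ * (‖q.coeff l‖ * x ^ l)) := by
          refine Finset.sum_le_sum fun l _ => ?_
          rw [sub_mul, coeff_sub, coeff_C_mul, ← mul_assoc, ← add_mul]
          gcongr
          refine (norm_sub_le _ _).trans ?_
          rw [norm_mul]
      _ ≤ _ := by
          rw [Finset.sum_add_distrib, ← Finset.mul_sum, add_mul]
          gcongr
          exact ih N

theorem exists_near_root {P₀ P₁ : ℂ[X]} (h0 : P₀ ≠ 0) {ε : ℝ} (hε : ε * 3 ^ P₀.natDegree < 1)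
    (hc : ∀ l, ‖P₁.coeff l - P₀.coeff l‖ ≤ ε * ‖P₀.coeff l‖) {v : ℂ} (hv : P₁.eval v = 0) :
    ∃ w, P₀.IsRoot w ∧ ‖v - w‖ ≤ (1 / 3) * (‖v‖ + ‖w‖) := by
  by_contra! hcon
  set n := P₀.natDegree
  have hsp := IsAlgClosed.splits P₀
  have hfac : P₀ = C P₀.leadingCoeff * (P₀.roots.map fun w => X - C w).prod :=
    hsp.eq_prod_roots
  have hcard : P₀.roots.card = n := hsp.natDegree_eq_card_roots.symm
  have hlc : 0 < ‖P₀.leadingCoeff‖ := norm_pos_iff.2 (leadingCoeff_ne_zero.2 h0)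
  have hlow : ‖P₀.eval v‖ = ‖P₀.leadingCoeff‖ * (P₀.roots.map fun w => ‖v - w‖).prod := by
    conv_lhs => rw [hfac]
    rw [eval_mul, eval_C, norm_mul, eval_multiset_prod, Multiset.map_map]
    congr 1
    have := map_multiset_prod (normHom : ℂ →*₀ ℝ) (P₀.roots.map fun w => v - w)
    simpa [Multiset.map_map, Function.comp_def] using this
  have hprod : ((1 : ℝ) / 3) ^ n * (P₀.roots.map fun w => ‖v‖ + ‖w‖).prod ≤
      (P₀.roots.map fun w => ‖v - w‖).prod := by
    have h1 : (P₀.roots.map fun w => (1 / 3 : ℝ) * (‖v‖ + ‖w‖)).prod =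
        (1 / 3) ^ n * (P₀.roots.map fun w => ‖v‖ + ‖w‖).prod := by
      rw [Multiset.prod_map_mul, Multiset.map_const', Multiset.prod_replicate, hcard]
    rw [← h1]
    exact Multiset.prod_map_le_prod_map₀ _ _ (fun w _ => by positivity)
      fun w hw => (hcon w (isRoot_of_mem_roots hw)).le
  have hε0 : 0 ≤ ε := by
    have h1 := (norm_nonneg _).trans (hc n)
    exact nonneg_of_mul_nonneg_left h1 hlc
  have hdeg : P₁.natDegree < n + 1 := by
    rw [Nat.lt_succ_iff, natDegree_le_iff_coeff_eq_zero]
    intro l hl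
    have h1 := hc l
    rw [coeff_eq_zero_of_natDegree_lt hl] at h1
    simpa using h1
  have hup : ‖P₀.eval v‖ ≤
      ε * (‖P₀.leadingCoeff‖ * (P₀.roots.map fun w => ‖v‖ + ‖w‖).prod) := by
    have h1 : P₀.eval v = ∑ l ∈ Finset.range (n + 1), (P₀.coeff l - P₁.coeff l) * v ^ l := by
      rw [← sub_zero (P₀.eval v), ← hv, eval_eq_sum_range' hdeg, eval_eq_sum_range,
        ← Finset.sum_sub_distrib]
      exact Finset.sum_congr rfl fun l _ => by ring
    have h2 : ∑ l ∈ Finset.range (n + 1), ‖P₀.coeff l‖ * ‖v‖ ^ l ≤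
        ‖P₀.leadingCoeff‖ * (P₀.roots.map fun w => ‖v‖ + ‖w‖).prod := by
      calc _ = ‖P₀.leadingCoeff‖ * ∑ l ∈ Finset.range (n + 1),
            ‖(P₀.roots.map fun w => (X - C w : ℂ[X])).prod.coeff l‖ * ‖v‖ ^ l := by
            rw [Finset.mul_sum]
            refine Finset.sum_congr rfl fun l _ => ?_
            conv_lhs => rw [hfac]
            rw [coeff_C_mul, norm_mul, mul_assoc]
        _ ≤ _ := mul_le_mul_of_nonneg_left (sum_norm_coeff_prod_le _ (norm_nonneg _) _) hlc.le
    rw [h1]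
    refine (norm_sum_le _ _).trans (le_trans ?_ (mul_le_mul_of_nonneg_left h2 hε0))
    rw [Finset.mul_sum]
    refine Finset.sum_le_sum fun l _ => ?_
    rw [norm_mul, norm_pow, norm_sub_rev, ← mul_assoc]
    gcongr
    exact hc l
  set M := (P₀.roots.map fun w => ‖v‖ + ‖w‖).prod
  have hM0 : M = 0 := by
    refine le_antisymm ?_ (Multiset.prod_nonneg (by
      intro a ha
      obtain ⟨w, -, rfl⟩ := Multiset.mem_map.1 ha
      positivity))
    by_contra! hpos
    have h1 : (1 / 3) ^ n * M ≤ ε * M := by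
      have h2 : ‖P₀.leadingCoeff‖ * ((1 / 3) ^ n * M) ≤ ‖P₀.leadingCoeff‖ * (ε * M) := by
        calc _ ≤ _ := mul_le_mul_of_nonneg_left hprod hlc.le
          _ ≤ _ := hlow ▸ hup
          _ = _ := by ring
      exact le_of_mul_le_mul_left h2 hlc
    have h2 := le_of_mul_le_mul_right h1 hpos
    rw [one_div, inv_pow, inv_le_iff_one_le_mul₀ (by positivity)] at h2
    linarith
  obtain ⟨w, hw, h0w⟩ := Multiset.mem_map.1 (Multiset.prod_eq_zero_iff.1 hM0)
  have h1 := hcon w (isRoot_of_mem_roots hw)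
  have h2 := norm_sub_le v w
  linarith

theorem norm_le_of_near_roots {S : Set ℂ} (hS : IsPreconnected S) {P : ℂ[X]} (hP : P ≠ 0)
    {u : ℂ → ℂ} (hu : ContinuousOn u S)
    (hnear : ∀ τ ∈ S, ∃ w, P.IsRoot w ∧ ‖u τ - w‖ ≤ (1 / 3) * (‖u τ‖ + ‖w‖))
    {τ τ' : ℂ} (hτ : τ ∈ S) (hτ' : τ' ∈ S) : ‖u τ‖ ≤ 5 ^ P.natDegree * ‖u τ'‖ := by
  by_contra! hcon
  set n := P.natDegree
  set b := ‖u τ‖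
  have hb : 0 < b := lt_of_le_of_lt (by positivity) hcon
  have hlev : ∀ k ∈ Finset.range (n + 1), ∃ w, P.IsRoot w ∧ b / 5 ^ k ≤ 2 * ‖w‖ ∧
      ‖w‖ ≤ 2 * (b / 5 ^ k) := by
    intro k hk
    have hkn : k ≤ n := by simpa [Nat.lt_succ_iff] using hk
    have hmem : b / 5 ^ k ∈ Icc ‖u τ'‖ ‖u τ‖ := by
      constructor
      · rw [le_div_iff₀ (by positivity), mul_comm]
        refine le_trans ?_ hcon.le
        gcongr
        norm_num
      · exact div_le_self hb.le (one_le_pow₀ (by norm_num))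
    obtain ⟨σ, hσ, hσb⟩ := hS.intermediate_value hτ' hτ hu.norm hmem
    obtain ⟨w, hw, hdist⟩ := hnear σ hσ
    simp only at hσb
    rw [hσb] at hdist
    have h1 := norm_sub_norm_le (u σ) w
    have h2 := norm_sub_norm_le w (u σ)
    rw [norm_sub_rev] at h2
    rw [hσb] at h1 h2
    exact ⟨w, hw, by linarith, by linarith⟩
  choose! w hw hw1 hw2 using hlev
  have hmaps : ∀ k ∈ Finset.range (n + 1), w k ∈ P.roots.toFinset := by
    intro k hk
    rw [Multiset.mem_toFinset, mem_roots hP]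
    exact hw k hk
  have hsep : ∀ j ∈ Finset.range (n + 1), ∀ k ∈ Finset.range (n + 1), j < k → w j ≠ w k := by
    intro j hj k hk hjk heq
    have h1 := hw1 j hj
    have h2 := hw2 k hk
    rw [heq] at h1
    have h3 : b / 5 ^ k ≤ (b / 5 ^ j) / 5 := by
      rw [div_div, ← pow_succ]
      gcongr
      · norm_num
      · omega
    have h4 : 0 < b / 5 ^ j := by positivity
    linarith
  have hinj : InjOn w (Finset.range (n + 1)) := by
    intro j hj k hk heq
    rcases lt_trichotomy j k with h | h | h
    · exact absurd heq (hsep j hj k hk h)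
    · exact h
    · exact absurd heq.symm (hsep k hk j hj h)
  have h1 := Finset.card_le_card_of_injOn w hmaps hinj
  have h2 := (Multiset.toFinset_card_le P.roots).trans (card_roots' P)
  rw [Finset.card_range] at h1
  omega

/-- A holomorphic function on the disc of radius `r` around `0` whose relative deviation from its
value at `0` is at most `K`. -/
structure Steady (r K : ℝ) (e : ℂ → ℂ) : Prop where
  diff : DifferentiableOn ℂ e (ball 0 r)
  bound : ∀ τ ∈ ball (0 : ℂ) r, ‖e τ - e 0‖ ≤ K * ‖e 0‖

namespace Steady

variable {r r' K K' : ℝ} {e f : ℂ → ℂ}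

theorem mono (h : Steady r K e) (hr : r' ≤ r) (hK : K ≤ K') : Steady r' K' e :=
  ⟨h.diff.mono (ball_subset_ball hr), fun τ hτ => (h.bound τ (ball_subset_ball hr hτ)).trans
    (mul_le_mul_of_nonneg_right hK (norm_nonneg _))⟩

theorem congr (h : Steady r K e) (hr : 0 < r) (hf : EqOn f e (ball 0 r)) : Steady r K f :=
  ⟨h.diff.congr hf, fun τ hτ => by rw [hf hτ, hf (mem_ball_self hr)]; exact h.bound τ hτ⟩

theorem const (r : ℝ) (c : ℂ) : Steady r 0 fun _ => c :=
  ⟨differentiableOn_const c, fun τ _ => by simp⟩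

theorem neg (h : Steady r K e) : Steady r K fun τ => -e τ :=
  ⟨h.diff.neg, fun τ hτ => by
    rw [← neg_sub', norm_neg, norm_neg]
    exact h.bound τ hτ⟩

theorem norm_sub_le (h : Steady r K e) {τ : ℂ} (hτ : τ ∈ ball (0 : ℂ) r) :
    ‖e τ - e 0‖ ≤ K * (‖τ‖ / r) * ‖e 0‖ := by
  have h1 := Complex.dist_le_div_mul_dist_of_mapsTo_ball (R₂ := K * ‖e 0‖) h.diff
    (fun σ hσ => by rw [mem_closedBall, dist_eq_norm]; exact h.bound σ hσ) hτ
  rw [dist_eq_norm, dist_zero_right] at h1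
  exact h1.trans_eq (by ring)

theorem shrink (h : Steady r K e) (hr : 0 < r) (hK : 0 ≤ K) {s : ℝ} (hs : s ≤ 1) :
    Steady (s * r) (s * K) e := by
  have hsr : s * r ≤ r := mul_le_of_le_one_left hr.le hs
  refine ⟨h.diff.mono (ball_subset_ball hsr), fun τ hτ => ?_⟩
  refine (h.norm_sub_le (ball_subset_ball hsr hτ)).trans ?_
  have h1 : ‖τ‖ / r ≤ s := by
    rw [div_le_iff₀ hr]
    exact (mem_ball_zero_iff.1 hτ).le
  rw [mul_comm s]
  gcongr

theorem norm_second_diff_le (h : Steady r K e) {τ : ℂ} (hτ : τ ∈ ball (0 : ℂ) r) :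
    ‖e τ + e (-τ) - 2 * e 0‖ ≤ 2 * K * (‖τ‖ / r) ^ 2 * ‖e 0‖ := by
  have hr : 0 < r := pos_of_mem_ball hτ
  have hneg : MapsTo (fun τ : ℂ => -τ) (ball 0 r) (ball 0 r) := fun σ hσ => by simpa using hσ
  let E : ℂ → ℂ := fun σ => e σ + e (-σ)
  have hE : DifferentiableOn ℂ E (ball 0 r) :=
    h.diff.add (h.diff.comp differentiable_neg.differentiableOn hneg)
  have hE0 : E 0 = 2 * e 0 := by simp [E, two_mul]
  have hd : HasDerivAt e (deriv e 0) 0 :=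
    (h.diff.differentiableAt (ball_mem_nhds 0 hr)).hasDerivAt
  have hdE : HasDerivAt E 0 0 := by
    have h1 : HasDerivAt e (deriv e 0) (-0) := by simpa using hd
    have h2 := hd.add (h1.comp (0 : ℂ) (hasDerivAt_neg (0 : ℂ)))
    simpa using! h2
  have hlit : (E · - E 0) =o[𝓝 0] (fun w : ℂ => ‖w - 0‖ ^ 1) := by
    have := hdE.isLittleO
    simpa using this.norm_right
  have hmaps : MapsTo E (ball 0 r) (closedBall (E 0) (2 * K * ‖e 0‖)) := by
    intro σ hσ
    rw [mem_closedBall, dist_eq_norm, hE0]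
    have h1 := h.bound σ hσ
    have h2 := h.bound (-σ) (hneg hσ)
    calc ‖e σ + e (-σ) - 2 * e 0‖ = ‖(e σ - e 0) + (e (-σ) - e 0)‖ := by ring_nf
      _ ≤ _ := (norm_add_le _ _).trans (by linarith)
  have h1 := Complex.dist_le_mul_div_pow_of_mapsTo_ball_of_isLittleO hE hmaps hlit hτ
  rw [dist_eq_norm, dist_zero_right, hE0] at h1
  exact h1.trans_eq (by ring)

theorem mul (he : Steady r K e) (hf : Steady r K' f) :
    Steady r ((1 + K) * (1 + K') - 1) fun τ => e τ * f τ := by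
  refine ⟨he.diff.mul hf.diff, fun τ hτ => ?_⟩
  have h1 := he.bound τ hτ
  have h2 := hf.bound τ hτ
  calc ‖e τ * f τ - e 0 * f 0‖
      = ‖(e τ - e 0) * (f τ - f 0) + e 0 * (f τ - f 0) + (e τ - e 0) * f 0‖ := by ring_nf
    _ ≤ ‖(e τ - e 0) * (f τ - f 0)‖ + ‖e 0 * (f τ - f 0)‖ + ‖(e τ - e 0) * f 0‖ := norm_add₃_le
    _ = ‖e τ - e 0‖ * ‖f τ - f 0‖ + ‖e 0‖ * ‖f τ - f 0‖ + ‖e τ - e 0‖ * ‖f 0‖ := by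
      simp only [norm_mul]
    _ ≤ (K * ‖e 0‖) * (K' * ‖f 0‖) + ‖e 0‖ * (K' * ‖f 0‖) + (K * ‖e 0‖) * ‖f 0‖ := by
      gcongr
      exact (norm_nonneg _).trans h1
    _ = _ := by rw [norm_mul]; ring

theorem pow (he : Steady r K e) (n : ℕ) : Steady r ((1 + K) ^ n - 1) fun τ => e τ ^ n := by
  induction n with
  | zero => simpa using Steady.const r 1
  | succ n ih =>
    have := ih.mul he
    simpa [pow_succ] using this

theorem of_root {P : ℂ → ℂ[X]} {ε : ℝ} {n : ℕ} (hr : 0 < r) (hP : P 0 ≠ 0)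
    (hn : (P 0).natDegree ≤ n) (hε : ε * 3 ^ n < 1)
    (hc : ∀ l, ∀ τ ∈ ball (0 : ℂ) r,
      ‖(P τ).coeff l - (P 0).coeff l‖ ≤ ε * ‖(P 0).coeff l‖)
    {u : ℂ → ℂ} (hu : DifferentiableOn ℂ u (ball 0 r))
    (hroot : ∀ τ ∈ ball (0 : ℂ) r, (P τ).eval (u τ) = 0) :
    Steady r (1 + 5 ^ n) u := by
  have hε' : ε * 3 ^ (P 0).natDegree < 1 := by
    rcases le_or_gt 0 ε with h | h
    · refine lt_of_le_of_lt ?_ hε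
      gcongr
      norm_num
    · exact (mul_neg_of_neg_of_pos h (by positivity)).trans one_pos
  refine ⟨hu, fun τ hτ => ?_⟩
  have h1 := norm_le_of_near_roots (convex_ball (0 : ℂ) r).isPreconnected hP hu.continuousOn
    (fun σ hσ => exists_near_root hP hε' (fun l => hc l σ hσ) (hroot σ hσ)) hτ (mem_ball_self hr)
  refine (_root_.norm_sub_le _ _).trans ?_
  have h2 : (5 : ℝ) ^ (P 0).natDegree * ‖u 0‖ ≤ 5 ^ n * ‖u 0‖ := by
    gcongr
    norm_num
  linarith

end Steady

theorem exists_annihilator {R : Type*} [CommRing R] [IsDomain R] {q : R[X]} (hq : q ≠ 0)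
    (p : R[X]) : ∃ (N : R[X]) (j : ℕ), N.coeff 0 ≠ 0 ∧ q ∣ p ^ j * N.comp p := by
  have hroot : IsAlgebraic R (AdjoinRoot.root q) := by
    refine ⟨q, hq, ?_⟩
    rw [AdjoinRoot.aeval_eq, AdjoinRoot.mk_self]
  have hp : IsAlgebraic R (AdjoinRoot.mk q p) := by
    rw [← AdjoinRoot.aeval_eq]
    induction p using Polynomial.induction_on' with
    | add p₁ p₂ h₁ h₂ => rw [map_add]; exact h₁.add h₂
    | monomial n a =>
      rw [aeval_monomial]
      exact (isAlgebraic_algebraMap a).mul (hroot.pow n)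
  obtain ⟨N', hN', h0⟩ := hp
  obtain ⟨N, hN, hdvd⟩ := exists_eq_pow_rootMultiplicity_mul_and_not_dvd N' hN' 0
  refine ⟨N, rootMultiplicity 0 N', ?_, ?_⟩
  · rw [C_0, sub_zero, X_dvd_iff] at hdvd
    exact hdvd
  · rw [← AdjoinRoot.mk_eq_zero]
    have h1 : AdjoinRoot.mk q (N'.comp p) = 0 := by
      rw [← h0, ← AdjoinRoot.aeval_eq p, ← aeval_comp, AdjoinRoot.aeval_eq]
    rw [← h1]
    conv_rhs => rw [hN]
    rw [C_0, sub_zero, mul_comp, pow_comp, X_comp]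

theorem exists_sum_abs_coeff_le_of_nodes (n : ℕ) (x : Fin (n + 1) → ℝ) (hx : Function.Injective x) :
    ∃ C : ℝ, 0 ≤ C ∧ ∀ p : ℝ[X], p.natDegree ≤ n → ∀ b, (∀ i, |p.eval (x i)| ≤ b) →
      ∑ k ∈ Finset.range (n + 1), |p.coeff k| ≤ C * b := by
  have hker : LinearMap.ker (Matrix.vandermonde x).mulVecLin = ⊥ := by
    rw [LinearMap.ker_eq_bot, Matrix.coe_mulVecLin, Matrix.mulVec_injective_iff_isUnit,
      Matrix.isUnit_iff_isUnit_det]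
    exact (Matrix.det_vandermonde_ne_zero_iff.2 hx).isUnit
  obtain ⟨K, -, hK⟩ := LinearMap.exists_antilipschitzWith _ hker
  refine ⟨(n + 1) * K, by positivity, fun p hp b hb => ?_⟩
  have hb0 : 0 ≤ b := (abs_nonneg _).trans (hb 0)
  let c : Fin (n + 1) → ℝ := fun k => p.coeff k
  have h1 : ‖c‖ ≤ K * b := by
    refine (hK.le_mul_norm (map_zero _) c).trans ?_
    gcongr
    rw [pi_norm_le_iff_of_nonneg hb0]
    intro i
    have : (Matrix.vandermonde x).mulVecLin c i = p.eval (x i) := by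
      rw [eval_eq_sum_range' (Nat.lt_succ_of_le hp), Matrix.mulVecLin_apply, Matrix.mulVec,
        dotProduct, ← Fin.sum_univ_eq_sum_range (fun k => p.coeff k * x i ^ k)]
      simp [c, Matrix.vandermonde_apply, mul_comm]
    rw [this]
    exact hb i
  calc ∑ k ∈ Finset.range (n + 1), |p.coeff k| ≤ ∑ k ∈ Finset.range (n + 1), K * b := by
        refine Finset.sum_le_sum fun k hk => ?_
        exact (norm_le_pi_norm c ⟨k, Finset.mem_range.1 hk⟩).trans h1
    _ = _ := by simp [mul_assoc]

theorem exists_sum_abs_coeff_le (n : ℕ) :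
    ∃ C : ℝ, 0 ≤ C ∧ ∀ p : ℝ[X], p.natDegree ≤ n →
      (derivative p = 0 ∨ (∀ x ∈ Ioo (0 : ℝ) 2, p.eval x ≠ 0) ∧
        ∀ x ∈ Ioo (0 : ℝ) 2, (derivative p).eval x ≠ 0) →
      ∑ k ∈ Finset.range (n + 1), |p.coeff k| ≤ C * |p.eval 1| := by
  let x : Fin (n + 1) → ℝ := fun i => (i + 1) / (n + 1)
  have hx : Function.Injective x := by
    intro i j hij
    have h1 : (i + 1 : ℝ) = j + 1 := by
      have : (n + 1 : ℝ) ≠ 0 := by positivity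
      simpa [x, div_left_inj' this] using hij
    exact Fin.ext (by exact_mod_cast add_right_cancel h1)
  have hx0 : ∀ i, 0 < x i := fun i => by positivity
  have hx1 : ∀ i, x i ≤ 1 := fun i => by
    rw [div_le_one (by positivity)]
    have : ((i : ℕ) : ℝ) ≤ n := by exact_mod_cast Nat.lt_succ_iff.1 i.2
    linarith
  let y : Fin (n + 1) → ℝ := fun i => 2 - (i + 1) / (n + 2)
  have hy : Function.Injective y := by
    intro i j hij
    have h1 : (i + 1 : ℝ) = j + 1 := by
      have : (n + 2 : ℝ) ≠ 0 := by positivity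
      simpa [y, div_left_inj' this] using hij
    exact Fin.ext (by exact_mod_cast add_right_cancel h1)
  have hy2 : ∀ i, y i < 2 := fun i => by
    have : (0 : ℝ) < (i + 1) / (n + 2) := by positivity
    simp only [y]
    linarith
  have hy1 : ∀ i, 1 ≤ y i := fun i => by
    have : ((i + 1 : ℝ)) / (n + 2) ≤ 1 := by
      rw [div_le_one (by positivity)]
      have : ((i : ℕ) : ℝ) ≤ n := by exact_mod_cast Nat.lt_succ_iff.1 i.2
      linarith
    simp only [y]
    linarith
  obtain ⟨C₁, hC₁, h₁⟩ := exists_sum_abs_coeff_le_of_nodes n x hx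
  obtain ⟨C₂, hC₂, h₂⟩ := exists_sum_abs_coeff_le_of_nodes n y hy
  refine ⟨max C₁ C₂, le_max_of_le_left hC₁, fun p hp hcase => ?_⟩
  suffices h : (∀ i, |p.eval (x i)| ≤ |p.eval 1|) ∨ ∀ i, |p.eval (y i)| ≤ |p.eval 1| by
    rcases h with h | h
    · refine (h₁ p hp _ h).trans ?_
      gcongr
      exact le_max_left _ _
    · refine (h₂ p hp _ h).trans ?_
      gcongr
      exact le_max_right _ _
  rcases hcase with h0 | ⟨hne, hne'⟩
  · left
    intro i
    rw [eq_C_of_derivative_eq_zero h0]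
    simp
  have hsq : ∀ z, HasDerivAt (fun t => p.eval t ^ 2) (2 * p.eval z * (derivative p).eval z) z := by
    intro z
    have := (p.hasDerivAt z).pow 2
    simpa using! this
  have hcont : ContinuousOn (fun z => 2 * p.eval z * (derivative p).eval z) (Ioo 0 2) := by fun_prop
  have hsign : (∀ z ∈ Ioo (0 : ℝ) 2, 0 ≤ 2 * p.eval z * (derivative p).eval z) ∨
      ∀ z ∈ Ioo (0 : ℝ) 2, 2 * p.eval z * (derivative p).eval z ≤ 0 := by
    by_contra! hcon
    obtain ⟨⟨u, hu, hu0⟩, v, hv, hv0⟩ := hcon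
    obtain ⟨z, hz, hz0⟩ := isPreconnected_Ioo.intermediate_value hu hv hcont ⟨hu0.le, hv0.le⟩
    simp only at hz0
    have := mul_ne_zero (mul_ne_zero two_ne_zero (hne z hz)) (hne' z hz)
    exact this hz0
  have hint : ∀ z ∈ interior (Ioo (0 : ℝ) 2), z ∈ Ioo (0 : ℝ) 2 := fun z hz => by
    rwa [isOpen_Ioo.interior_eq] at hz
  have hcsq : ContinuousOn (fun t => p.eval t ^ 2) (Ioo (0 : ℝ) 2) := by fun_prop
  rcases hsign with hs | hs
  · left
    intro i
    have := monotoneOn_of_deriv_nonneg (convex_Ioo (0 : ℝ) 2) hcsq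
      (fun z _ => (hsq z).differentiableAt.differentiableWithinAt)
      (fun z hz => by rw [(hsq z).deriv]; exact hs z (hint z hz))
    exact sq_le_sq.1 (this ⟨hx0 i, (hx1 i).trans_lt one_lt_two⟩ ⟨one_pos, one_lt_two⟩ (hx1 i))
  · right
    intro i
    have := antitoneOn_of_deriv_nonpos (convex_Ioo (0 : ℝ) 2) hcsq
      (fun z _ => (hsq z).differentiableAt.differentiableWithinAt)
      (fun z hz => by rw [(hsq z).deriv]; exact hs z (hint z hz))
    exact sq_le_sq.1 (this ⟨one_pos, one_lt_two⟩ ⟨one_pos.trans_le (hy1 i), hy2 i⟩ (hy1 i))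

theorem exists_consecutive (A : Finset ℝ) (hA : ∀ x ∈ A, x ∈ Icc (0 : ℝ) 1) (h0 : (0 : ℝ) ∈ A)
    (h1 : (1 : ℝ) ∈ A) : ∃ (M : ℕ) (a : ℕ → ℝ), a 0 = 0 ∧ a M = 1 ∧ (∀ i ≤ M, a i ∈ A) ∧
      ∀ i < M, a i < a (i + 1) ∧ ∀ x ∈ Ioo (a i) (a (i + 1)), x ∉ A := by
  obtain ⟨M, hM⟩ : ∃ M, A.card = M + 1 :=
    Nat.exists_eq_succ_of_ne_zero (Finset.card_ne_zero_of_mem h0)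
  let o := A.orderEmbOfFin hM
  have hr : ∀ x ∈ A, ∃ i, o i = x := fun x hx => by
    have : x ∈ Set.range o := by rw [Finset.range_orderEmbOfFin]; exact hx
    exact this
  let a : ℕ → ℝ := fun i => if h : i < M + 1 then o ⟨i, h⟩ else 0
  have ha : ∀ i (h : i < M + 1), a i = o ⟨i, h⟩ := fun i h => dif_pos h
  have hmem : ∀ i, o i ∈ A := fun i => Finset.orderEmbOfFin_mem A hM i
  refine ⟨M, a, ?_, ?_, ?_, ?_⟩
  · rw [ha 0 (by omega)]
    obtain ⟨i, hi⟩ := hr 0 h0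
    refine le_antisymm ?_ (hA _ (hmem _)).1
    rw [← hi]
    exact o.monotone (Nat.zero_le _)
  · rw [ha M (by omega)]
    obtain ⟨i, hi⟩ := hr 1 h1
    refine le_antisymm (hA _ (hmem _)).2 ?_
    conv_lhs => rw [← hi]
    exact o.monotone (Nat.lt_succ_iff.1 i.2)
  · intro i hi
    rw [ha i (by omega)]
    exact hmem _
  · intro i hi
    rw [ha i (by omega), ha (i + 1) (by omega)]
    refine ⟨o.strictMono (by simp), ?_⟩
    rintro x ⟨hx1, hx2⟩ hx
    obtain ⟨j, rfl⟩ := hr x hx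
    rw [o.lt_iff_lt] at hx1 hx2
    rw [Fin.lt_def] at hx1 hx2
    simp only at hx1 hx2
    omega

section

/-- A family of ring homomorphisms to `ℂ` depending holomorphically on a parameter in the unit
disc, compatible with complex conjugation, and equal to `ψ₀` at the origin. -/
structure IsHoloFamily {R : Type*} [CommRing R] (ψ : ℂ → R →+* ℂ) (ψ₀ : R →+* ℝ) : Prop where
  diff : ∀ a, DifferentiableOn ℂ (fun τ => ψ τ a) (ball 0 1)
  map_conj : ∀ a, ∀ τ ∈ ball (0 : ℂ) 1, ψ (conj τ) a = conj (ψ τ a)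
  at_zero : ∀ a, ψ 0 a = ψ₀ a

variable {R : Type*} [CommRing R] {ψ : ℂ → R →+* ℂ} {ψ₀ : R →+* ℝ}

namespace IsHoloFamily

theorem contDiffAt_eval (hψ : IsHoloFamily ψ ψ₀) (p : R[X]) {x : ℂ × ℂ}
    (hx : x.1 ∈ ball (0 : ℂ) 1) :
    ContDiffAt ℂ 1 (fun y : ℂ × ℂ => (p.map (ψ y.1)).eval y.2) x := by
  simp only [eval_map, eval₂_eq_sum_range]
  refine ContDiffAt.sum fun l _ => ContDiffAt.mul ?_ (contDiffAt_snd.pow l)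
  have h1 : ContDiffAt ℂ 1 (fun τ => ψ τ (p.coeff l)) x.1 :=
    ((hψ.diff (p.coeff l)).analyticAt (isOpen_ball.mem_nhds hx)).contDiffAt
  exact ContDiffAt.comp (f := Prod.fst) (g := fun τ => ψ τ (p.coeff l)) x h1 contDiffAt_fst

theorem differentiableOn_eval (hψ : IsHoloFamily ψ ψ₀) (p : R[X]) {r : ℝ} (hr : r ≤ 1)
    {θ : ℂ → ℂ} (hθ : DifferentiableOn ℂ θ (ball 0 r)) :
    DifferentiableOn ℂ (fun τ => (p.map (ψ τ)).eval (θ τ)) (ball 0 r) := by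
  simp only [eval_map, eval₂_eq_sum_range]
  exact DifferentiableOn.fun_sum fun l _ =>
    ((hψ.diff _).mono (ball_subset_ball hr)).mul (hθ.pow l)

theorem eval_conj (hψ : IsHoloFamily ψ ψ₀) (p : R[X]) {τ : ℂ} (hτ : τ ∈ ball (0 : ℂ) 1) (s : ℂ) :
    (p.map (ψ (conj τ))).eval (conj s) = conj ((p.map (ψ τ)).eval s) := by
  simp only [eval_map, eval₂_eq_sum_range, map_sum, map_mul, map_pow, hψ.map_conj _ τ hτ]

theorem map_zero_eq (hψ : IsHoloFamily ψ ψ₀) (p : R[X]) :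
    p.map (ψ 0) = (p.map ψ₀).map Complex.ofRealHom := by
  ext l
  simp [coeff_map, hψ.at_zero]

theorem eval_zero_eq (hψ : IsHoloFamily ψ ψ₀) (p : R[X]) (a : ℝ) :
    (p.map (ψ 0)).eval (a : ℂ) = ((p.map ψ₀).eval a : ℝ) := by
  rw [hψ.map_zero_eq]
  exact eval_map_apply Complex.ofRealHom a

end IsHoloFamily

theorem exists_root_section (hψ : IsHoloFamily ψ ψ₀) {q N : R[X]} {j n : ℕ}
    (hdvd : q ∣ derivative q ^ j * N.comp (derivative q)) {r r₀ ε : ℝ} (hr : 0 < r) (hrr : r < r₀)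
    (hr₀ : r₀ ≤ 1) (hn : q.natDegree ≤ n) (hq : q.map ψ₀ ≠ 0) (hε : ε * 3 ^ n < 1)
    (hqc : ∀ l, ∀ τ ∈ ball (0 : ℂ) r₀,
      ‖ψ τ (q.coeff l) - ψ 0 (q.coeff l)‖ ≤ ε * ‖ψ 0 (q.coeff l)‖)
    (hN : ∀ τ ∈ ball (0 : ℂ) r₀, ψ τ (N.coeff 0) ≠ 0) {a : ℝ} (ha : (q.map ψ₀).eval a = 0)
    (ha' : ((derivative q).map ψ₀).eval a ≠ 0) :
    ∃ θ : ℂ → ℂ, DifferentiableOn ℂ θ (ball 0 r) ∧ θ 0 = a ∧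
      (∀ τ ∈ ball (0 : ℂ) r, (q.map (ψ τ)).eval (θ τ) = 0) ∧
      ∀ τ ∈ ball (0 : ℂ) r, θ (conj τ) = conj (θ τ) := by
  have hq0 : q.map (ψ 0) ≠ 0 := by
    rw [hψ.map_zero_eq]
    exact (Polynomial.map_ne_zero_iff Complex.ofRealHom.injective).2 hq
  have hε' : ε * 3 ^ (q.map (ψ 0)).natDegree < 1 := by
    rcases le_or_gt 0 ε with h | h
    · refine lt_of_le_of_lt ?_ hε
      gcongr
      · norm_num
      · exact natDegree_map_le.trans hn
    · exact (mul_neg_of_neg_of_pos h (by positivity)).trans one_pos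
  let F : ℂ × ℂ → ℂ := fun x => (q.map (ψ x.1)).eval x.2
  let D : ℂ × ℂ → ℂ := fun x => ((derivative q).map (ψ x.1)).eval x.2
  let T : ℂ × ℂ → ℂ := fun x => (N.map (ψ x.1)).eval (D x)
  let B : ℝ := 2 * ((q.map (ψ 0)).roots.map fun w => ‖w‖).sum
  have hB : ∀ x : ℂ × ℂ, x.1 ∈ ball (0 : ℂ) r₀ → F x = 0 → ‖x.2‖ ≤ B := by
    intro x hx hx0
    obtain ⟨w, hw, hdist⟩ := exists_near_root hq0 hε'
      (fun l => by simpa only [coeff_map] using hqc l x.1 hx) hx0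
    have h1 := norm_sub_norm_le x.2 w
    have h2 : ‖w‖ ≤ ((q.map (ψ 0)).roots.map fun w => ‖w‖).sum :=
      Multiset.single_le_sum (by
        intro y hy
        obtain ⟨z, -, rfl⟩ := Multiset.mem_map.1 hy
        exact norm_nonneg z) _ (Multiset.mem_map_of_mem _ ((mem_roots hq0).2 hw))
    simp only [B]
    linarith
  have hT : ∀ x, F x = 0 → D x ≠ 0 → T x = 0 := by
    intro x hx hD
    have h1 := Polynomial.map_dvd (ψ x.1) hdvd
    rw [Polynomial.map_mul, Polynomial.map_pow, Polynomial.map_comp] at h1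
    have h2 := eval_dvd (x := x.2) h1
    rw [show (q.map (ψ x.1)).eval x.2 = 0 from hx, zero_dvd_iff, eval_mul, eval_pow, eval_comp] at h2
    exact (mul_eq_zero.1 h2).resolve_left (pow_ne_zero _ hD)
  have hD : ∀ x : ℂ × ℂ, x.1 ∈ ball (0 : ℂ) r₀ → T x = 0 → D x ≠ 0 := by
    intro x hx hT0 h0
    refine hN x.1 hx ?_
    have : T x = ψ x.1 (N.coeff 0) := by
      simp only [T, h0]
      rw [← coeff_zero_eq_eval_zero, coeff_map]
    rw [← this, hT0]
  have hb1 : ball (0 : ℂ) r₀ ⊆ ball 0 1 := ball_subset_ball hr₀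
  have hcb : closedBall (0 : ℂ) r ⊆ ball 0 r₀ := closedBall_subset_ball hrr
  have hbb : ball (0 : ℂ) r ⊆ ball 0 r₀ := ball_subset_ball hrr.le
  have hcD : ∀ x : ℂ × ℂ, x.1 ∈ ball (0 : ℂ) r₀ → ContinuousAt D x := fun x hx =>
    (hψ.contDiffAt_eval (derivative q) (hb1 hx)).continuousAt
  have hcF : ∀ x : ℂ × ℂ, x.1 ∈ ball (0 : ℂ) r₀ → ContinuousAt F x := fun x hx =>
    (hψ.contDiffAt_eval q (hb1 hx)).continuousAt
  have hcT : ∀ x : ℂ × ℂ, x.1 ∈ ball (0 : ℂ) r₀ → ContinuousAt T x := fun x hx =>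
    ContinuousAt.comp (f := fun y : ℂ × ℂ => (y.1, D y))
      (g := fun y : ℂ × ℂ => (N.map (ψ y.1)).eval y.2)
      (hψ.contDiffAt_eval N (x := (x.1, D x)) (hb1 hx)).continuousAt
      (continuousAt_fst.prodMk (hcD x hx))
  let K : Set (ℂ × ℂ) := closedBall 0 r ×ˢ closedBall 0 B
  have hK : IsCompact K := (isCompact_closedBall _ _).prod (isCompact_closedBall _ _)
  have hKr : ∀ x ∈ K, x.1 ∈ ball (0 : ℂ) r₀ := fun x hx => hcb hx.1
  let E : Set (ℂ × ℂ) := (K ∩ F ⁻¹' {0}) ∩ (K ∩ T ⁻¹' {0})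
  have hEc : IsCompact E := by
    refine hK.of_isClosed_subset ?_ (fun x hx => hx.1.1)
    refine IsClosed.inter ?_ ?_
    · exact ContinuousOn.preimage_isClosed_of_isClosed
        (fun x hx => (hcF x (hKr x hx)).continuousWithinAt) hK.isClosed isClosed_singleton
    · exact ContinuousOn.preimage_isClosed_of_isClosed
        (fun x hx => (hcT x (hKr x hx)).continuousWithinAt) hK.isClosed isClosed_singleton
  have hmemE : ∀ x : ℂ × ℂ, x.1 ∈ ball (0 : ℂ) r → F x = 0 → D x ≠ 0 → x ∈ E := by
    intro x hx hF hD
    have h1 : x ∈ K := ⟨ball_subset_closedBall hx, by simpa using hB x (hbb hx) hF⟩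
    exact ⟨⟨h1, hF⟩, h1, hT x hF hD⟩
  have hED : ∀ x ∈ E, D x ≠ 0 := fun x hx => hD x (hKr x hx.1.1) hx.2.2
  have haE : ((0 : ℂ), (a : ℂ)) ∈ E := by
    refine hmemE _ (mem_ball_self hr) ?_ ?_
    · simp only [F, hψ.eval_zero_eq, ha, Complex.ofReal_zero]
    · simp only [D, hψ.eval_zero_eq]
      exact_mod_cast ha'
  have hloc : ∀ x ∈ E, x.1 ∈ ball (0 : ℂ) r → ∀ᶠ y in 𝓝 x, F y = 0 → y ∈ E := by
    intro x hx hxr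
    have h5 : ∀ᶠ y : ℂ × ℂ in 𝓝 x, y.1 ∈ ball (0 : ℂ) r :=
      continuousAt_fst.eventually (isOpen_ball.mem_nhds hxr)
    have h6 : ∀ᶠ y : ℂ × ℂ in 𝓝 x, D y ≠ 0 :=
      (hcD x (hbb hxr)).eventually_ne (hED x hx)
    filter_upwards [h5, h6] with y h7 h8 h9 using hmemE y h7 h9 h8
  have hdiff : ∀ x ∈ E, x.1 ∈ ball (0 : ℂ) r →
      ∃ F' : ℂ × ℂ →L[ℂ] ℂ, HasStrictFDerivAt F F' x ∧ F' (0, 1) ≠ 0 := by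
    intro x hx hxr
    have h5 := (hψ.contDiffAt_eval q (hb1 (hbb hxr))).hasStrictFDerivAt one_ne_zero
    refine ⟨_, h5, ?_⟩
    have h6 : HasDerivAt (fun s : ℂ => (x.1, s)) ((0 : ℂ), (1 : ℂ)) x.2 :=
      (hasDerivAt_const _ _).prodMk (hasDerivAt_id _)
    have h7 := HasFDerivAt.comp_hasDerivAt (f := fun s : ℂ => (x.1, s)) x.2 h5.hasFDerivAt h6
    have h8 := (q.map (ψ x.1)).hasDerivAt x.2
    rw [derivative_map] at h8
    rw [h7.unique h8]
    exact hED x hx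
  obtain ⟨θ, h1, h2, h3, h4⟩ := exists_holomorphic_section (F := F) hr hEc (fun x hx => hx.1.2) hloc
    hdiff haE
  refine ⟨θ, h1, h2, fun τ hτ => (h3 τ hτ).1.2, ?_⟩
  have hcj : ∀ τ : ℂ, τ ∈ ball (0 : ℂ) r → conj τ ∈ ball (0 : ℂ) r := fun τ hτ => by
    simpa using hτ
  have h5 := h4 (fun τ => conj (θ (conj τ))) ?_ ?_ ?_
  · intro τ hτ
    rw [← h5 (hcj τ hτ)]
    simp
  · exact Complex.continuous_conj.comp_continuousOn
      (h1.continuousOn.comp Complex.continuous_conj.continuousOn hcj)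
  · simp [h2]
  · intro τ hτ
    have h6 := h3 _ (hcj τ hτ)
    have h7 := hb1 (hbb (hcj τ hτ))
    refine hmemE _ hτ ?_ ?_
    · have := hψ.eval_conj q h7 (θ (conj τ))
      rw [Complex.conj_conj] at this
      simp only [F]
      rw [this, show (q.map (ψ (conj τ))).eval (θ (conj τ)) = 0 from h6.1.2, map_zero]
    · have := hψ.eval_conj (derivative q) h7 (θ (conj τ))
      rw [Complex.conj_conj] at this
      simp only [D]
      rw [this]
      exact (_root_.map_ne_zero _).2 (hED _ h6)

end

section

theorem exists_simple_root_iterate_derivative {f : ℝ[X]} (hf : f ≠ 0) {a : ℝ} (ha : f.eval a = 0) :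
    ∃ m ≤ f.natDegree, (derivative^[m] f).eval a = 0 ∧ (derivative^[m + 1] f).eval a ≠ 0 := by
  have h1 : ∃ m, ¬ (derivative^[m] f).IsRoot a := by
    by_contra! h
    exact lt_irrefl _ ((lt_rootMultiplicity_iff_isRoot_iterate_derivative
      (n := f.rootMultiplicity a) hf).2 fun m _ => h m)
  classical
  obtain ⟨m, hm⟩ : ∃ m, Nat.find h1 = m + 1 := Nat.exists_eq_succ_of_ne_zero fun h0 => by
    have := Nat.find_spec h1
    rw [h0] at this
    exact this ha
  have h2 := Nat.find_spec h1
  rw [hm] at h2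
  have h3 : (derivative^[m] f).eval a = 0 := not_not.1 (Nat.find_min h1 (m := m) (by omega))
  refine ⟨m, ?_, h3, h2⟩
  by_contra! h
  refine h2 ?_
  rw [iterate_derivative_eq_zero (by omega)]
  simp [IsRoot]

variable {R : Type*} [CommRing R] {ψ : ℂ → R →+* ℂ} {ψ₀ : R →+* ℝ}

theorem IsHoloFamily.steady_eval_of_root (hψ : IsHoloFamily ψ ψ₀) {q p N : R[X]} {j n : ℕ}
    (hdvd : q ∣ p ^ j * N.comp p) {r ε : ℝ} (hr : 0 < r) (hr₁ : r ≤ 1)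
    (hn : j + N.natDegree ≤ n) (hN : N.map ψ₀ ≠ 0) (hε : ε * 3 ^ n < 1)
    (hNc : ∀ l, ∀ τ ∈ ball (0 : ℂ) r,
      ‖ψ τ (N.coeff l) - ψ 0 (N.coeff l)‖ ≤ ε * ‖ψ 0 (N.coeff l)‖)
    {θ : ℂ → ℂ} (hθ : DifferentiableOn ℂ θ (ball 0 r))
    (hroot : ∀ τ ∈ ball (0 : ℂ) r, (q.map (ψ τ)).eval (θ τ) = 0) :
    Steady r (1 + 5 ^ n) fun τ => (p.map (ψ τ)).eval (θ τ) := by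
  have hN0 : N.map (ψ 0) ≠ 0 := by
    rw [hψ.map_zero_eq]
    exact (Polynomial.map_ne_zero_iff Complex.ofRealHom.injective).2 hN
  refine Steady.of_root (P := fun τ => X ^ j * N.map (ψ τ)) (ε := ε) hr
    (mul_ne_zero (pow_ne_zero _ X_ne_zero) hN0) ?_ hε ?_ (hψ.differentiableOn_eval p hr₁ hθ) ?_
  · refine natDegree_mul_le.trans (le_trans ?_ hn)
    rw [natDegree_X_pow]
    exact Nat.add_le_add_left natDegree_map_le _
  · intro l τ hτ
    simp only [coeff_X_pow_mul']
    split_ifs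
    · simpa only [coeff_map] using hNc _ τ hτ
    · simp
  · intro τ hτ
    have h1 := Polynomial.map_dvd (ψ τ) hdvd
    rw [Polynomial.map_mul, Polynomial.map_pow, Polynomial.map_comp] at h1
    have h2 := eval_dvd (x := θ τ) h1
    rw [hroot τ hτ, zero_dvd_iff, eval_mul, eval_pow, eval_comp] at h2
    simpa using h2

theorem hasseDeriv_map (f : R →+* ℂ) (k : ℕ) (p : R[X]) :
    hasseDeriv k (p.map f) = (hasseDeriv k p).map f := by
  ext l
  simp [hasseDeriv_coeff]

theorem IsHoloFamily.steady_sub_of_root (hψ : IsHoloFamily ψ ψ₀) {q : R[X]} {n : ℕ} {r K : ℝ}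
    (hr : 0 < r) (hK : 0 ≤ K) (hn : q.natDegree ≤ n) (hq : q.map ψ₀ ≠ 0) {θ θ' : ℂ → ℂ}
    (hθ : DifferentiableOn ℂ θ (ball 0 r)) (hθ' : DifferentiableOn ℂ θ' (ball 0 r))
    (hroot : ∀ τ ∈ ball (0 : ℂ) r, (q.map (ψ τ)).eval (θ τ) = 0)
    (hst : ∀ k, Steady r K fun τ => ((hasseDeriv k q).map (ψ τ)).eval (θ' τ)) {s : ℝ}
    (hs : 0 < s) (hs₁ : s ≤ 1) (hsK : s * K * 3 ^ n < 1) :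
    Steady (s * r) (1 + 5 ^ n) fun τ => θ' τ - θ τ := by
  have hq0 : q.map (ψ 0) ≠ 0 := by
    rw [hψ.map_zero_eq]
    exact (Polynomial.map_ne_zero_iff Complex.ofRealHom.injective).2 hq
  have hsr : ball (0 : ℂ) (s * r) ⊆ ball 0 r :=
    ball_subset_ball (mul_le_of_le_one_left hr.le hs₁)
  have h : Steady (s * r) (1 + 5 ^ n) fun τ => θ τ - θ' τ := by
    refine Steady.of_root (P := fun τ => taylor (θ' τ) (q.map (ψ τ))) (ε := s * K) (mul_pos hs hr)
      ?_ ?_ hsK ?_ ((hθ.sub hθ').mono hsr) ?_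
    · rwa [Ne, taylor_eq_zero]
    · rw [natDegree_taylor]
      exact natDegree_map_le.trans hn
    · intro l τ hτ
      simp only [taylor_coeff, hasseDeriv_map]
      exact ((hst l).shrink hr hK hs₁).bound τ hτ
    · intro τ hτ
      simp only [taylor_eval]
      rw [sub_add_cancel]
      exact hroot τ (hsr hτ)
  simpa using h.neg

theorem IsHoloFamily.steady_eval_add (hψ : IsHoloFamily ψ ψ₀) {f : R[X]} {n : ℕ} {r K B : ℝ}
    (hr₁ : r ≤ 1) (hK : 0 ≤ K) (hn : f.natDegree ≤ n)
    (hB : ∀ p : ℝ[X], p.natDegree ≤ n → (derivative p = 0 ∨ (∀ x ∈ Ioo (0 : ℝ) 2, p.eval x ≠ 0) ∧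
      ∀ x ∈ Ioo (0 : ℝ) 2, (derivative p).eval x ≠ 0) →
      ∑ k ∈ Finset.range (n + 1), |p.coeff k| ≤ B * |p.eval 1|)
    {θ w : ℂ → ℂ} {a b : ℝ} (ha : θ 0 = a) (hb : w 0 = b) (hθ : DifferentiableOn ℂ θ (ball 0 r))
    (hst : ∀ k, Steady r K fun τ => ((hasseDeriv k f).map (ψ τ)).eval (θ τ)) (hw : Steady r K w)
    (hne : ∀ x ∈ Ioo (0 : ℝ) 2, (f.map ψ₀).eval (a + b * x) ≠ 0)
    (hne' : (derivative f).map ψ₀ = 0 ∨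
      ∀ x ∈ Ioo (0 : ℝ) 2, ((derivative f).map ψ₀).eval (a + b * x) ≠ 0) (hb0 : b ≠ 0) :
    Steady r ((1 + K) ^ (n + 1) * B) (fun τ => (f.map (ψ τ)).eval (θ τ + w τ)) ∧
      (f.map (ψ 0)).eval (θ 0 + w 0) ≠ 0 := by
  let p : ℝ[X] := (taylor a (f.map ψ₀)).comp (C b * X)
  have hpe : ∀ x, p.eval x = (f.map ψ₀).eval (a + b * x) := fun x => by
    simp [p, taylor_eval, add_comm]
  have hpd : derivative p = C b * (taylor a ((derivative f).map ψ₀)).comp (C b * X) := by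
    simp only [p, derivative_comp, taylor_apply, derivative_map]
    simp
  have hpd' : ∀ x, (derivative p).eval x = b * ((derivative f).map ψ₀).eval (a + b * x) :=
    fun x => by
      rw [hpd]
      simp [taylor_eval, add_comm]
  have h1 := hB p ?_ ?_
  rotate_left
  · refine natDegree_comp_le.trans ?_
    rw [natDegree_taylor]
    refine (Nat.mul_le_mul_left _ ((natDegree_C_mul_le b X).trans natDegree_X_le)).trans ?_
    rw [mul_one]
    exact natDegree_map_le.trans hn
  · rcases hne' with h | h
    · left
      rw [hpd, h]
      simp
    · right
      exact ⟨fun x hx => by rw [hpe]; exact hne x hx, fun x hx => by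
        rw [hpd']; exact mul_ne_zero hb0 (h x hx)⟩
  have hval : (f.map (ψ 0)).eval (θ 0 + w 0) = (p.eval 1 : ℝ) := by
    rw [ha, hb, ← Complex.ofReal_add, hψ.eval_zero_eq, hpe, mul_one]
  have hsum : ∀ τ, (f.map (ψ τ)).eval (θ τ + w τ) = ∑ k ∈ Finset.range (n + 1),
      ((hasseDeriv k f).map (ψ τ)).eval (θ τ) * w τ ^ k := by
    intro τ
    rw [add_comm, ← taylor_eval, eval_eq_sum_range' (n := n + 1)]
    · simp only [taylor_coeff, hasseDeriv_map]
    · rw [natDegree_taylor]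
      exact Nat.lt_succ_of_le (natDegree_map_le.trans hn)
  have hcoeff : ∀ k, ‖((hasseDeriv k f).map (ψ 0)).eval (θ 0) * w 0 ^ k‖ = |p.coeff k| := by
    intro k
    rw [ha, hb, hψ.eval_zero_eq, ← Complex.ofReal_pow, ← Complex.ofReal_mul, Complex.norm_real,
      Real.norm_eq_abs, comp_C_mul_X_coeff, taylor_coeff]
    congr 3
    ext l
    simp [hasseDeriv_coeff]
  refine ⟨⟨?_, fun τ hτ => ?_⟩, ?_⟩
  · exact hψ.differentiableOn_eval f hr₁ (hθ.add hw.diff)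
  · have h0 : ‖(f.map (ψ 0)).eval (θ 0 + w 0)‖ = |p.eval 1| := by
      rw [hval, Complex.norm_real, Real.norm_eq_abs]
    rw [h0, hsum τ, hsum 0, ← Finset.sum_sub_distrib]
    refine (norm_sum_le _ _).trans ?_
    calc _ ≤ ∑ k ∈ Finset.range (n + 1), (1 + K) ^ (n + 1) * |p.coeff k| := by
          refine Finset.sum_le_sum fun k hk => ?_
          have h2 := ((hst k).mul (hw.pow k)).bound τ hτ
          rw [hcoeff] at h2
          refine h2.trans ?_
          gcongr
          have h3 : (1 + K) ^ (k + 1) ≤ (1 + K) ^ (n + 1) :=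
            pow_le_pow_right₀ (by linarith) (by have := Finset.mem_range.1 hk; omega)
          calc _ = (1 + K) ^ (k + 1) - 1 := by ring
            _ ≤ _ := by linarith
      _ ≤ _ := by
          rw [← Finset.mul_sum, mul_assoc]
          gcongr
  · rw [hval, hpe]
    exact_mod_cast hne 1 ⟨one_pos, one_lt_two⟩

end

/-- A partition of the complexified unit interval, depending holomorphically on a parameter in the
disc of radius `ρ`, such that every polynomial of the family `F` is steady on each of the pieces. -/
structure IsSteadyPartition {R : Type*} [CommRing R] (ψ : ℂ → R →+* ℂ) (F : Finset R[X]) (ρ : ℝ)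
    (M : ℕ) (θ : ℕ → ℂ → ℂ) : Prop where
  diff : ∀ i ≤ M, DifferentiableOn ℂ (θ i) (ball 0 ρ)
  map_conj : ∀ i ≤ M, ∀ τ ∈ ball (0 : ℂ) ρ, θ i (conj τ) = conj (θ i τ)
  first : ∀ τ ∈ ball (0 : ℂ) ρ, θ 0 τ = 0
  last : ∀ τ ∈ ball (0 : ℂ) ρ, θ M τ = 1
  gap : ∀ i < M, Steady ρ (1 / 2) fun τ => θ (i + 1) τ - θ i τ
  gap_pos : ∀ i < M, 0 < (θ (i + 1) 0 - θ i 0).re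
  steady : ∀ i < M, ∀ f ∈ F, ∀ t ∈ Ioo (0 : ℝ) 1,
    Steady ρ (1 / 2) fun τ => (f.map (ψ τ)).eval (θ i τ + t * (θ (i + 1) τ - θ i τ))
  ne_zero : ∀ i < M, ∀ f ∈ F, ∀ t ∈ Ioo (0 : ℝ) 1,
    (f.map (ψ 0)).eval (θ i 0 + t * (θ (i + 1) 0 - θ i 0)) ≠ 0

theorem exists_isSteadyPartition {R : Type*} [CommRing R] [IsDomain R] (F : Finset R[X])
    (hF : (0 : R[X]) ∉ F) :
    ∃ F' : Finset R, (0 : R) ∉ F' ∧ ∃ ρ > 0, ρ ≤ 1 ∧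
      ∀ (ψ : ℂ → R →+* ℂ) (ψ₀ : R →+* ℝ), IsHoloFamily ψ ψ₀ →
        (∀ c ∈ F', ψ₀ c ≠ 0 ∧ Steady 1 (1 / 2) fun τ => ψ τ c) →
        ∃ M θ, IsSteadyPartition ψ F ρ M θ := by
  classical
  let F₁ : Finset R[X] := F ∪ {X, X - C 1}
  have hF₁ : ∀ f ∈ F₁, f ≠ 0 := by
    intro f hf
    simp only [F₁, Finset.mem_union, Finset.mem_insert, Finset.mem_singleton] at hf
    rcases hf with hf | rfl | rfl
    · exact fun h => hF (h ▸ hf)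
    · exact X_ne_zero
    · exact X_sub_C_ne_zero 1
  let G : Finset R[X] := (F₁.biUnion fun f => (Finset.range (f.natDegree + 1)).image
    fun m => derivative^[m] f).filter (· ≠ 0)
  have hG : ∀ f ∈ F₁, ∀ m ≤ f.natDegree, derivative^[m] f ≠ 0 → derivative^[m] f ∈ G := by
    intro f hf m hm h0
    refine Finset.mem_filter.2 ⟨Finset.mem_biUnion.2 ⟨f, hf, Finset.mem_image_of_mem _ ?_⟩, h0⟩
    exact Finset.mem_range.2 (Nat.lt_succ_of_le hm)
  have hG0 : ∀ q ∈ G, q ≠ 0 := fun q hq => (Finset.mem_filter.1 hq).2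
  have hF₁G : ∀ f ∈ F₁, f ∈ G := fun f hf => hG f hf 0 (Nat.zero_le _) (hF₁ f hf)
  have hXG : (X : R[X]) ∈ G := hF₁G _ (by simp [F₁])
  have hX1G : (X - C 1 : R[X]) ∈ G := hF₁G _ (by simp [F₁])
  let P : Finset R[X] := G.biUnion fun g => (Finset.range (g.natDegree + 1)).image
    fun k => hasseDeriv k g
  have hP : ∀ g ∈ G, ∀ k ≤ g.natDegree, hasseDeriv k g ∈ P := by
    intro g hg k hk
    refine Finset.mem_biUnion.2 ⟨g, hg, Finset.mem_image_of_mem _ ?_⟩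
    exact Finset.mem_range.2 (Nat.lt_succ_of_le hk)
  have hGP : ∀ g ∈ G, g ∈ P := fun g hg => by
    simpa using hP g hg 0 (Nat.zero_le _)
  choose! N j hN0 hdvd using fun (q : R[X]) (hq : q ≠ 0) (p : R[X]) => exists_annihilator hq p
  let F' : Finset R := G.biUnion coeffs ∪ (G ×ˢ (P ∪ G.image derivative)).biUnion
    fun x => (N x.1 x.2).coeffs
  let n : ℕ := max (G.sup natDegree)
    ((G ×ˢ (P ∪ G.image derivative)).sup fun x => j x.1 x.2 + (N x.1 x.2).natDegree)
  have hnG : ∀ q ∈ G, q.natDegree ≤ n := fun q hq =>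
    (Finset.le_sup (f := natDegree) hq).trans (le_max_left _ _)
  have hnN : ∀ q ∈ G, ∀ p ∈ P ∪ G.image derivative, j q p + (N q p).natDegree ≤ n := fun q hq p hp =>
    (Finset.le_sup (f := fun x : R[X] × R[X] => j x.1 x.2 + (N x.1 x.2).natDegree)
      (Finset.mk_mem_product hq hp)).trans (le_max_right _ _)
  have hF'0 : (0 : R) ∉ F' := by
    simp only [F', Finset.mem_union, Finset.mem_biUnion, mem_coeffs_iff, mem_support_iff, not_or,
      not_exists, not_and]
    exact ⟨fun q _ l hl h => hl h.symm, fun q _ l hl h => hl h.symm⟩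
  have hF'G : ∀ q ∈ G, ∀ l, q.coeff l = 0 ∨ q.coeff l ∈ F' := by
    intro q hq l
    refine or_iff_not_imp_left.2 fun h => Finset.mem_union_left _ (Finset.mem_biUnion.2 ⟨q, hq, ?_⟩)
    exact coeff_mem_coeffs h
  have hF'N : ∀ q ∈ G, ∀ p ∈ P ∪ G.image derivative, ∀ l,
      (N q p).coeff l = 0 ∨ (N q p).coeff l ∈ F' := by
    intro q hq p hp l
    refine or_iff_not_imp_left.2 fun h => Finset.mem_union_right _
      (Finset.mem_biUnion.2 ⟨(q, p), Finset.mk_mem_product hq hp, ?_⟩)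
    exact coeff_mem_coeffs h
  obtain ⟨B, hB0, hB⟩ := exists_sum_abs_coeff_le n
  let K : ℝ := 1 + 5 ^ n
  have hK : 0 < K := by positivity
  let r₁ : ℝ := (3 ^ n)⁻¹
  have hr₁ : 0 < r₁ := by positivity
  have hr₁1 : r₁ ≤ 1 := inv_le_one_of_one_le₀ (one_le_pow₀ (by norm_num))
  have hr₁n : r₁ * 3 ^ n = 1 := inv_mul_cancel₀ (by positivity)
  let r₂ : ℝ := r₁ / 2
  have hr₂ : 0 < r₂ := by positivity
  have hr₂1 : r₂ ≤ 1 := by simp only [r₂]; linarith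
  let s : ℝ := r₁ / (2 * K)
  have hs : 0 < s := by positivity
  have hK1 : 1 ≤ K := by simp only [K]; linarith [show (0 : ℝ) ≤ 5 ^ n by positivity]
  have hs1 : s ≤ 1 := by
    rw [div_le_one (by positivity)]
    linarith
  have hsK : s * K * 3 ^ n < 1 := by
    have : s * K = r₁ / 2 := by simp only [s]; field_simp
    rw [this, div_mul_eq_mul_div, hr₁n]
    norm_num
  let r₃ : ℝ := s * r₂
  have hr₃ : 0 < r₃ := by positivity
  have hr₃2 : r₃ ≤ r₂ := mul_le_of_le_one_left hr₂.le hs1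
  let K' : ℝ := K + (1 + K) ^ (n + 1) * B
  have hK'0 : 0 ≤ (1 + K) ^ (n + 1) * B := by positivity
  have hK' : 1 ≤ K' := by simp only [K']; linarith
  let s' : ℝ := 1 / (2 * K')
  have hs' : 0 < s' := by positivity
  have hs'1 : s' ≤ 1 := by
    rw [div_le_one (by positivity)]
    linarith
  have hs'K : s' * K' = 1 / 2 := by simp only [s']; field_simp
  let ρ : ℝ := s' * r₃
  have hρ : 0 < ρ := by positivity
  have hρ3 : ρ ≤ r₃ := mul_le_of_le_one_left hr₃.le hs'1
  refine ⟨F', hF'0, ρ, hρ, hρ3.trans (hr₃2.trans hr₂1), fun ψ ψ₀ hψ hgood => ?_⟩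
  have hcoef : ∀ c : R, c = 0 ∨ c ∈ F' → ∀ τ ∈ ball (0 : ℂ) r₁,
      ‖ψ τ c - ψ 0 c‖ ≤ r₁ / 2 * ‖ψ 0 c‖ := by
    rintro c (rfl | hc) τ hτ
    · simp
    · have := ((hgood c hc).2.shrink one_pos (by norm_num) hr₁1).bound τ (by simpa using hτ)
      simpa [div_eq_mul_inv] using this
  have hε : r₁ / 2 * 3 ^ n < 1 := by
    rw [div_mul_eq_mul_div, hr₁n]
    norm_num
  have hmap : ∀ p : R[X], p ≠ 0 → (∀ l, p.coeff l = 0 ∨ p.coeff l ∈ F') → p.map ψ₀ ≠ 0 := by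
    intro p hp hc h0
    refine hp (Polynomial.ext fun l => ?_)
    rcases hc l with h | h
    · simpa using h
    · have : (p.map ψ₀).coeff l = 0 := by rw [h0, coeff_zero]
      rw [coeff_map] at this
      exact absurd this (hgood _ h).1
  have hGmap : ∀ q ∈ G, q.map ψ₀ ≠ 0 := fun q hq => hmap q (hG0 q hq) (hF'G q hq)
  have hNmap : ∀ q ∈ G, ∀ p ∈ P ∪ G.image derivative, (N q p).map ψ₀ ≠ 0 := fun q hq p hp =>
    hmap _ (fun h0 => hN0 q (hG0 q hq) p (by rw [h0, coeff_zero])) (hF'N q hq p hp)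
  have hbb : ball (0 : ℂ) r₂ ⊆ ball 0 r₁ := ball_subset_ball (half_le_self hr₁.le)
  -- steadiness along root sections
  have hroot : ∀ q ∈ G, ∀ θ : ℂ → ℂ, DifferentiableOn ℂ θ (ball 0 r₂) →
      (∀ τ ∈ ball (0 : ℂ) r₂, (q.map (ψ τ)).eval (θ τ) = 0) → ∀ p ∈ P,
      Steady r₂ K fun τ => (p.map (ψ τ)).eval (θ τ) := by
    intro q hq θ hθ hθq p hp
    have hp' : p ∈ P ∪ G.image derivative := Finset.mem_union_left _ hp
    exact hψ.steady_eval_of_root (hdvd q (hG0 q hq) p) hr₂ hr₂1 (hnN q hq p hp')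
      (hNmap q hq p hp') hε (fun l τ hτ => hcoef _ (hF'N q hq p hp' l) τ (hbb hτ)) hθ hθq
  have hhasse : ∀ q ∈ G, ∀ θ : ℂ → ℂ, DifferentiableOn ℂ θ (ball 0 r₂) →
      (∀ τ ∈ ball (0 : ℂ) r₂, (q.map (ψ τ)).eval (θ τ) = 0) → ∀ g ∈ G, ∀ k,
      Steady r₂ K fun τ => ((hasseDeriv k g).map (ψ τ)).eval (θ τ) := by
    intro q hq θ hθ hθq g hg k
    rcases le_or_gt k g.natDegree with hk | hk
    · exact hroot q hq θ hθ hθq _ (hP g hg k hk)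
    · rw [hasseDeriv_eq_zero_of_lt_natDegree _ _ hk]
      simpa using (Steady.const r₂ 0).mono le_rfl hK.le
  -- the division points
  let A : Finset ℝ := (G.biUnion fun g => (g.map ψ₀).roots.toFinset).filter (· ∈ Icc 0 1)
  have hmemA : ∀ x ∈ Icc (0 : ℝ) 1, ∀ g ∈ G, (g.map ψ₀).eval x = 0 → x ∈ A := by
    intro x hx g hg hgx
    refine Finset.mem_filter.2 ⟨Finset.mem_biUnion.2 ⟨g, hg, ?_⟩, hx⟩
    exact Multiset.mem_toFinset.2 ((mem_roots (hGmap g hg)).2 hgx)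
  have hsec : ∀ a ∈ A, ∃ q ∈ G, ∃ θ : ℂ → ℂ, DifferentiableOn ℂ θ (ball 0 r₂) ∧ θ 0 = a ∧
      (∀ τ ∈ ball (0 : ℂ) r₂, (q.map (ψ τ)).eval (θ τ) = 0) ∧
      ∀ τ ∈ ball (0 : ℂ) r₂, θ (conj τ) = conj (θ τ) := by
    intro a ha
    obtain ⟨g, hg, hga⟩ := Finset.mem_biUnion.1 (Finset.mem_filter.1 ha).1
    obtain ⟨f, hf, hfg⟩ := Finset.mem_biUnion.1 (Finset.mem_filter.1 hg).1
    obtain ⟨m₀, hm₀, rfl⟩ := Finset.mem_image.1 hfg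
    have hga' : ((derivative^[m₀] f).map ψ₀).eval a = 0 :=
      (mem_roots'.1 (Multiset.mem_toFinset.1 hga)).2
    obtain ⟨m, hm, h1, h2⟩ := exists_simple_root_iterate_derivative (hGmap _ hg) hga'
    rw [← iterate_derivative_map, ← Function.iterate_add_apply, iterate_derivative_map] at h1 h2
    have hne : derivative^[m + m₀] f ≠ 0 := by
      intro h0
      refine h2 ?_
      rw [add_right_comm, Function.iterate_succ_apply', h0]
      simp
    have hq : derivative^[m + m₀] f ∈ G := by
      refine hG f hf _ ?_ hne
      by_contra! hlt
      exact hne (iterate_derivative_eq_zero hlt)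
    have hd : derivative (derivative^[m + m₀] f) ∈ P ∪ G.image derivative :=
      Finset.mem_union_right _ (Finset.mem_image_of_mem _ hq)
    refine ⟨_, hq, exists_root_section hψ (hdvd _ hne (derivative (derivative^[m + m₀] f))) hr₂
      (half_lt_self hr₁) hr₁1 (hnG _ hq) (hGmap _ hq) hε
      (fun l τ hτ => hcoef _ (hF'G _ hq l) τ hτ) (fun τ hτ h0 => ?_) h1 ?_⟩
    · have hc : (N (derivative^[m + m₀] f) (derivative (derivative^[m + m₀] f))).coeff 0 ∈ F' :=
        (hF'N _ hq _ hd 0).resolve_left (hN0 _ hne _)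
      have h3 := hcoef _ (Or.inr hc) τ hτ
      rw [h0, zero_sub, norm_neg] at h3
      have h4 : 0 < ‖ψ 0 ((N (derivative^[m + m₀] f)
          (derivative (derivative^[m + m₀] f))).coeff 0)‖ := by
        rw [hψ.at_zero, norm_pos_iff]
        exact_mod_cast (hgood _ hc).1
      nlinarith
    · rw [add_right_comm, Function.iterate_succ_apply'] at h2
      exact h2
  choose! q hqG Θ hΘd hΘ0 hΘq hΘc using hsec
  have h0A : (0 : ℝ) ∈ A := hmemA 0 (by simp) X hXG (by simp)
  have h1A : (1 : ℝ) ∈ A := hmemA 1 (by simp) (X - C 1) hX1G (by simp)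
  obtain ⟨M, a, ha0, haM, haA, hgap⟩ :=
    exists_consecutive A (fun x hx => (Finset.mem_filter.1 hx).2) h0A h1A
  let θ : ℕ → ℂ → ℂ := fun i => Θ (a i)
  have hθX : ∀ i ≤ M, Steady r₂ K (θ i) := fun i hi => by
    simpa using hroot _ (hqG _ (haA i hi)) _ (hΘd _ (haA i hi)) (hΘq _ (haA i hi)) X (hGP X hXG)
  have hθX1 : ∀ i ≤ M, Steady r₂ K fun τ => θ i τ - 1 := fun i hi => by
    simpa using hroot _ (hqG _ (haA i hi)) _ (hΘd _ (haA i hi)) (hΘq _ (haA i hi)) (X - C 1)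
      (hGP _ hX1G)
  have hρ2 : ball (0 : ℂ) ρ ⊆ ball 0 r₂ := ball_subset_ball (hρ3.trans hr₃2)
  have hmono : ∀ e, Steady r₃ K' e → Steady ρ (1 / 2) e := fun e he => by
    have := he.shrink hr₃ (by linarith) hs'1
    rwa [hs'K] at this
  have hw : ∀ i < M, Steady r₃ K fun τ => θ (i + 1) τ - θ i τ := by
    intro i hi
    have hi' := haA i hi.le
    exact hψ.steady_sub_of_root hr₂ hK.le (hnG _ (hqG _ hi')) (hGmap _ (hqG _ hi')) (hΘd _ hi')
      (hΘd _ (haA (i + 1) hi)) (hΘq _ hi') (hhasse _ (hqG _ (haA (i + 1) hi)) _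
        (hΘd _ (haA (i + 1) hi)) (hΘq _ (haA (i + 1) hi)) _ (hqG _ hi')) hs hs1 hsK
  have hbase : ∀ f ∈ F, ∀ i < M, ∀ l ≤ M, ∀ b : ℝ, b ≠ 0 →
      (∀ x ∈ Ioo (0 : ℝ) 2, a l + b * (a (i + 1) - a i) * x ∈ Ioo (a i) (a (i + 1))) →
      Steady ρ (1 / 2) (fun τ => (f.map (ψ τ)).eval (θ l τ + b * (θ (i + 1) τ - θ i τ))) ∧
        (f.map (ψ 0)).eval (θ l 0 + b * (θ (i + 1) 0 - θ i 0)) ≠ 0 := by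
    intro f hf i hi l hl b hb hx
    have hfG : f ∈ G := hF₁G f (Finset.mem_union_left _ hf)
    have hl' := haA l hl
    have hiA := haA i hi.le
    have hpos := (hgap i hi).1
    have havoid : ∀ g ∈ G, ∀ x ∈ Ioo (0 : ℝ) 2,
        (g.map ψ₀).eval (a l + b * (a (i + 1) - a i) * x) ≠ 0 := by
      intro g hg x hx2 h0
      have h3 := hx x hx2
      refine (hgap i hi).2 _ h3 (hmemA _ ⟨?_, ?_⟩ g hg h0)
      · exact ((Finset.mem_filter.1 hiA).2.1).trans h3.1.le
      · exact h3.2.le.trans (Finset.mem_filter.1 (haA (i + 1) hi)).2.2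
    have hwb : Steady r₃ K fun τ => (b : ℂ) * (θ (i + 1) τ - θ i τ) := by
      have := (Steady.const r₃ (b : ℂ)).mul (hw i hi)
      simpa using this
    have key := hψ.steady_eval_add (f := f) (θ := θ l)
      (w := fun τ => (b : ℂ) * (θ (i + 1) τ - θ i τ)) (a := a l) (b := b * (a (i + 1) - a i))
      (hr₃2.trans hr₂1) hK.le (hnG f hfG) hB (hΘ0 _ hl')
      (by simp only [θ]; rw [hΘ0 _ hiA, hΘ0 _ (haA (i + 1) hi)]; push_cast; ring)
      ((hΘd _ hl').mono (ball_subset_ball hr₃2))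
      (fun k => (hhasse _ (hqG _ hl') _ (hΘd _ hl') (hΘq _ hl') f hfG k).mono hr₃2 le_rfl) hwb
      (havoid f hfG) ?_ (mul_ne_zero hb (sub_ne_zero.2 hpos.ne'))
    · refine ⟨hmono _ (key.1.mono le_rfl ?_), key.2⟩
      simp only [K']
      linarith
    · rcases eq_or_ne (derivative f) 0 with h0 | h0
      · left
        rw [h0, Polynomial.map_zero]
      · right
        refine havoid _ ?_
        refine hG f (Finset.mem_union_left _ hf) 1 ?_ h0
        by_contra! hlt
        exact h0 (iterate_derivative_eq_zero (x := 1) hlt)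
  have hsteady : ∀ i < M, ∀ f ∈ F, ∀ t ∈ Ioo (0 : ℝ) 1,
      Steady ρ (1 / 2) (fun τ => (f.map (ψ τ)).eval (θ i τ + t * (θ (i + 1) τ - θ i τ))) ∧
        (f.map (ψ 0)).eval (θ i 0 + t * (θ (i + 1) 0 - θ i 0)) ≠ 0 := by
    intro i hi f hf t ht
    have hpos := (hgap i hi).1
    rcases le_or_gt t (1 / 2) with h | h
    · refine hbase f hf i hi i hi.le t ht.1.ne' fun x hx => ?_
      have h3 : 0 < t * x := mul_pos ht.1 hx.1
      have h4 : t * x < 1 := by nlinarith [hx.1, hx.2]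
      constructor <;> nlinarith
    · have h5 := hbase f hf i hi (i + 1) hi (t - 1) (by linarith [ht.2]) fun x hx => ?_
      · have h6 : ∀ τ, θ (i + 1) τ + ((t - 1 : ℝ) : ℂ) * (θ (i + 1) τ - θ i τ) =
            θ i τ + t * (θ (i + 1) τ - θ i τ) := fun τ => by
          push_cast
          ring
        simpa only [h6] using h5
      · have h3 : 0 < (1 - t) * x := mul_pos (by linarith [ht.2]) hx.1
        have h4 : (1 - t) * x < 1 := by nlinarith [hx.1, hx.2]
        constructor <;> nlinarith
  refine ⟨M, θ, fun i hi => (hΘd _ (haA i hi)).mono hρ2,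
    fun i hi τ hτ => hΘc _ (haA i hi) τ (hρ2 hτ), fun τ hτ => ?_, fun τ hτ => ?_,
    fun i hi => hmono _ ((hw i hi).mono le_rfl (by simp only [K']; linarith)), fun i hi => ?_,
    fun i hi f hf t ht => (hsteady i hi f hf t ht).1,
    fun i hi f hf t ht => (hsteady i hi f hf t ht).2⟩
  · have h1 : θ 0 0 = 0 := by simp only [θ]; rw [hΘ0 _ (haA 0 (Nat.zero_le _)), ha0]; simp
    have h2 := (hθX 0 (Nat.zero_le _)).bound τ (hρ2 hτ)
    simpa [h1] using h2
  · have h1 : θ M 0 = 1 := by simp only [θ]; rw [hΘ0 _ (haA M le_rfl), haM]; simp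
    have h2 := (hθX1 M le_rfl).bound τ (hρ2 hτ)
    simpa [h1, sub_eq_zero] using h2
  · simp only [θ]
    rw [hΘ0 _ (haA i hi.le), hΘ0 _ (haA (i + 1) hi), ← Complex.ofReal_sub, Complex.ofReal_re]
    linarith [(hgap i hi).1]

theorem Steady.comp_mul {r K : ℝ} {e : ℂ → ℂ} (h : Steady r K e) (hr : 0 < r) :
    Steady 1 K fun τ => e (r * τ) := by
  have hm : MapsTo (fun τ : ℂ => (r : ℂ) * τ) (ball 0 1) (ball 0 r) := fun τ hτ => by
    rw [mem_ball_zero_iff] at hτ ⊢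
    rw [norm_mul, Complex.norm_real, Real.norm_eq_abs, abs_of_pos hr]
    exact mul_lt_of_lt_one_right hr hτ
  refine ⟨h.diff.comp (differentiable_id.const_mul _).differentiableOn hm, fun τ hτ => ?_⟩
  rw [mul_zero]
  exact h.bound _ (hm hτ)

section Curves

variable {A : Type*} [CommRing A] {n : ℕ}

/-- Evaluation at a complex point of polynomials whose coefficients are specialised by `φ`. -/
noncomputable def complexEval (φ : A →+* ℝ) (x : Fin n → ℂ) : MvPolynomial (Fin n) A →+* ℂ :=
  MvPolynomial.eval₂Hom (Complex.ofRealHom.comp φ) x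

theorem complexEval_eq (φ : A →+* ℝ) (x : Fin n → ℂ) (f : MvPolynomial (Fin n) A) :
    complexEval φ x f = ∑ m ∈ f.support, (φ (f.coeff m) : ℂ) * ∏ i, x i ^ m i := by
  simp [complexEval, MvPolynomial.eval₂_eq']

theorem complexEval_ofReal (φ : A →+* ℝ) (x : Fin n → ℝ) (f : MvPolynomial (Fin n) A) :
    complexEval φ (fun i => (x i : ℂ)) f = (MvPolynomial.eval₂Hom φ x f : ℝ) := by
  simp [complexEval, MvPolynomial.eval₂_eq']

theorem complexEval_cons (φ : A →+* ℝ) (y : ℂ) (x : Fin n → ℂ) (f : MvPolynomial (Fin (n + 1)) A) :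
    complexEval φ (Fin.cons y x) f =
      ((MvPolynomial.finSuccEquiv A n f).map (complexEval φ x)).eval y := by
  have h : complexEval φ (Fin.cons y x) = (evalRingHom y).comp
      ((mapRingHom (complexEval φ x)).comp
        (MvPolynomial.finSuccEquiv A n : MvPolynomial (Fin (n + 1)) A →+* _)) := by
    refine MvPolynomial.ringHom_ext (fun a => ?_) (fun i => ?_)
    · simp [complexEval, MvPolynomial.finSuccEquiv_apply]
    · refine Fin.cases ?_ (fun i => ?_) i
      · simp [complexEval, MvPolynomial.finSuccEquiv_X_zero]
      · simp [complexEval, MvPolynomial.finSuccEquiv_X_succ]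
  rw [h]
  simp

/-- A holomorphic curve, real on the real axis, along which the polynomials in `F` are steady. -/
structure IsGoodCurve (φ : A →+* ℝ) (F : Finset (MvPolynomial (Fin n) A)) (X : ℂ → Fin n → ℂ) :
    Prop where
  diff : ∀ i, DifferentiableOn ℂ (fun τ => X τ i) (ball 0 1)
  map_conj : ∀ i, ∀ τ ∈ ball (0 : ℂ) 1, X (conj τ) i = conj (X τ i)
  ne_zero : ∀ f ∈ F, complexEval φ (X 0) f ≠ 0
  steady : ∀ f ∈ F, Steady 1 (1 / 2) fun τ => complexEval φ (X τ) f

/-- The real point of a curve at the real time `h`. -/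
def realPoint (X : ℂ → Fin n → ℂ) (h : ℝ) : Fin n → ℝ := fun i => (X h i).re

namespace IsGoodCurve

variable {φ : A →+* ℝ} {F : Finset (MvPolynomial (Fin n) A)} {X : ℂ → Fin n → ℂ}

theorem ofReal_realPoint (hX : IsGoodCurve φ F X) {h : ℝ} (hh : |h| < 1) :
    (fun i => (realPoint X h i : ℂ)) = X h := by
  funext i
  have h1 := hX.map_conj i h (by simpa using hh)
  rw [Complex.conj_ofReal] at h1
  exact Complex.conj_eq_iff_re.1 h1.symm

theorem isHoloFamily (hX : IsGoodCurve φ F X) : IsHoloFamily (fun τ => complexEval φ (X τ))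
    (MvPolynomial.eval₂Hom φ (realPoint X 0)) where
  diff f := by
    simp only [complexEval_eq]
    refine DifferentiableOn.fun_sum fun m _ => DifferentiableOn.const_mul ?_ _
    exact DifferentiableOn.fun_finsetProd fun i _ => (hX.diff i).pow _
  map_conj f τ hτ := by
    simp only [complexEval_eq, map_sum, map_mul, map_prod, map_pow, Complex.conj_ofReal,
      hX.map_conj _ τ hτ]
  at_zero f := by
    have := hX.ofReal_realPoint (h := 0) (by simp)
    rw [Complex.ofReal_zero] at this
    rw [← complexEval_ofReal, this]

end IsGoodCurve

/-- First and second order smallness of the relative variation of a function along good curves. -/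
structure IsTame (φ : A →+* ℝ) (F : Finset (MvPolynomial (Fin n) A)) (c K : ℝ)
    (H : (Fin n → ℝ) → ℝ) : Prop where
  first : ∀ X, IsGoodCurve φ F X → ∀ h : ℝ, |h| < c →
    |H (realPoint X h) - H (realPoint X 0)| ≤ K * |h| * H (realPoint X 0)
  second : ∀ X, IsGoodCurve φ F X → ∀ h : ℝ, |h| < c →
    |H (realPoint X h) + H (realPoint X (-h)) - 2 * H (realPoint X 0)| ≤
      K * |h| ^ 2 * H (realPoint X 0)

variable {φ : A →+* ℝ} {F : Finset (MvPolynomial (Fin (n + 1)) A)}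
  {F' : Finset (MvPolynomial (Fin n) A)} {X : ℂ → Fin n → ℂ} {ρ : ℝ} {M : ℕ} {θ : ℕ → ℂ → ℂ}

theorem IsSteadyPartition.isGoodCurve_cons (hX : IsGoodCurve φ F' X)
    (hθ : IsSteadyPartition (fun τ => complexEval φ (X τ))
      (F.map (MvPolynomial.finSuccEquiv A n).toEquiv.toEmbedding) ρ M θ) (hρ : 0 < ρ) (hρ₁ : ρ ≤ 1)
    {i : ℕ} (hi : i < M) {t : ℝ} (ht : t ∈ Ioo (0 : ℝ) 1) :
    IsGoodCurve φ F fun τ => (Fin.cons (θ i (ρ * τ) + t * (θ (i + 1) (ρ * τ) - θ i (ρ * τ)))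
      (X (ρ * τ)) : Fin (n + 1) → ℂ) := by
  have hm : MapsTo (fun τ : ℂ => (ρ : ℂ) * τ) (ball 0 1) (ball 0 ρ) := fun τ hτ => by
    rw [mem_ball_zero_iff] at hτ ⊢
    rw [norm_mul, Complex.norm_real, Real.norm_eq_abs, abs_of_pos hρ]
    exact mul_lt_of_lt_one_right hρ hτ
  have hmd : DifferentiableOn ℂ (fun τ : ℂ => (ρ : ℂ) * τ) (ball 0 1) :=
    (differentiable_id.const_mul _).differentiableOn
  have hb : ball (0 : ℂ) ρ ⊆ ball 0 1 := ball_subset_ball hρ₁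
  have hF : ∀ f ∈ F, MvPolynomial.finSuccEquiv A n f ∈
      F.map (MvPolynomial.finSuccEquiv A n).toEquiv.toEmbedding := fun f hf =>
    Finset.mem_map_of_mem (MvPolynomial.finSuccEquiv A n).toEquiv.toEmbedding hf
  refine ⟨fun l => ?_, fun l τ hτ => ?_, fun f hf => ?_, fun f hf => ?_⟩
  · refine Fin.cases ?_ (fun l => ?_) l
    · simp only [Fin.cons_zero]
      have h1 := (hθ.diff i hi.le).comp hmd hm
      have h2 := (hθ.diff (i + 1) hi).comp hmd hm
      exact h1.add ((h2.sub h1).const_mul _)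
    · simp only [Fin.cons_succ]
      exact (hX.diff l).comp hmd (hm.mono_right hb)
  · have hc : (ρ : ℂ) * conj τ = conj (ρ * τ) := by rw [map_mul, Complex.conj_ofReal]
    refine Fin.cases ?_ (fun l => ?_) l
    · simp only [Fin.cons_zero, hc, hθ.map_conj i hi.le _ (hm hτ), hθ.map_conj (i + 1) hi _ (hm hτ)]
      simp only [map_add, map_mul, map_sub, Complex.conj_ofReal]
    · simp only [Fin.cons_succ, hc]
      exact hX.map_conj l _ (hb (hm hτ))
  · simp only [complexEval_cons, mul_zero]
    exact hθ.ne_zero i hi _ (hF f hf) t ht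
  · simp only [complexEval_cons]
    exact (hθ.steady i hi _ (hF f hf) t ht).comp_mul hρ

end Curves

section

theorem abs_intervalIntegral_le {f g : ℝ → ℝ} {C : ℝ} (hg : IntervalIntegrable g volume 0 1)
    (h : ∀ t ∈ Ioo (0 : ℝ) 1, |f t| ≤ C * g t) :
    |∫ t in (0 : ℝ)..1, f t| ≤ C * ∫ t in (0 : ℝ)..1, g t := by
  rw [← intervalIntegral.integral_const_mul, ← Real.norm_eq_abs]
  refine intervalIntegral.norm_integral_le_of_norm_le zero_le_one ?_ (hg.const_mul C)
  have h1 : ∀ᵐ t : ℝ, t ≠ 1 := by simp [ae_iff]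
  filter_upwards [h1] with t ht ht'
  exact h t ⟨ht'.1, lt_of_le_of_ne ht'.2 ht⟩

theorem abs_mul_sub_le {I I₀ W W₀ K x : ℝ} (hx : x ≤ 1) (hI₀ : 0 ≤ I₀)
    (hW₀ : 0 ≤ W₀) (hI : |I - I₀| ≤ K * x * I₀) (hW : |W - W₀| ≤ 1 / 2 * x * W₀) :
    |I * W - I₀ * W₀| ≤ (2 * K + 1) * x * (I₀ * W₀) := by
  have h0 : 0 ≤ K * x * I₀ := (abs_nonneg _).trans hI
  have h1 : |W| ≤ 2 * W₀ := by
    have h2 := abs_sub_abs_le_abs_sub W W₀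
    rw [abs_of_nonneg hW₀] at h2
    nlinarith
  calc |I * W - I₀ * W₀| = |(I - I₀) * W + I₀ * (W - W₀)| := by ring_nf
    _ ≤ |I - I₀| * |W| + I₀ * |W - W₀| := by
        refine (abs_add_le _ _).trans ?_
        rw [abs_mul, abs_mul, abs_of_nonneg hI₀]
    _ ≤ (K * x * I₀) * (2 * W₀) + I₀ * (1 / 2 * x * W₀) := by gcongr
    _ ≤ _ := by
        have h3 : 0 ≤ 1 / 2 * x * W₀ := (abs_nonneg _).trans hW
        nlinarith [mul_nonneg hI₀ h3]

theorem abs_mul_second_diff_le {I J I₀ W V W₀ K x : ℝ} (hI₀ : 0 ≤ I₀)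
    (hI : |I - I₀| ≤ K * x * I₀) (hJ : |J - I₀| ≤ K * x * I₀)
    (hW : |W - W₀| ≤ 1 / 2 * x * W₀) (hV : |V - W₀| ≤ 1 / 2 * x * W₀) (hW₀ : 0 ≤ W₀)
    (hIJ : |I + J - 2 * I₀| ≤ K * x ^ 2 * I₀) (hWV : |W + V - 2 * W₀| ≤ x ^ 2 * W₀) :
    |I * W + J * V - 2 * (I₀ * W₀)| ≤ (2 * K + 1) * x ^ 2 * (I₀ * W₀) := by
  have h0 : 0 ≤ K * x * I₀ := (abs_nonneg _).trans hI
  calc |I * W + J * V - 2 * (I₀ * W₀)|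
      = |(I + J - 2 * I₀) * W₀ + (I - I₀) * (W - W₀) + (J - I₀) * (V - W₀)
          + I₀ * (W + V - 2 * W₀)| := by ring_nf
    _ ≤ |I + J - 2 * I₀| * W₀ + |I - I₀| * |W - W₀| + |J - I₀| * |V - W₀|
          + I₀ * |W + V - 2 * W₀| := by
        refine (abs_add_le _ _).trans (add_le_add ((abs_add_le _ _).trans
          (add_le_add ((abs_add_le _ _).trans (add_le_add ?_ ?_)) ?_)) ?_)
        · rw [abs_mul, abs_of_nonneg hW₀]
        · rw [abs_mul]
        · rw [abs_mul]
        · rw [abs_mul, abs_of_nonneg hI₀]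
    _ ≤ (K * x ^ 2 * I₀) * W₀ + (K * x * I₀) * (1 / 2 * x * W₀) + (K * x * I₀) * (1 / 2 * x * W₀)
          + I₀ * (x ^ 2 * W₀) := by gcongr
    _ = _ := by ring

variable {A : Type*} [CommRing A] {n : ℕ} {φ : A →+* ℝ}
  {F : Finset (MvPolynomial (Fin (n + 1)) A)} {F' : Finset (MvPolynomial (Fin n) A)}
  {X : ℂ → Fin n → ℂ} {ρ : ℝ} {M : ℕ} {θ : ℕ → ℂ → ℂ} {H : (Fin (n + 1) → ℝ) → ℝ} {B : ℝ}

theorem measurable_cons (x : Fin n → ℝ) :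
    Measurable fun y : ℝ => (Fin.cons y x : Fin (n + 1) → ℝ) := by
  refine measurable_pi_iff.2 fun i => ?_
  refine Fin.cases ?_ (fun i => ?_) i
  · exact measurable_id
  · simp

theorem intervalIntegrable_of_abs_le {f : ℝ → ℝ} (hf : Measurable f) (hB : ∀ x, |f x| ≤ B)
    (a b : ℝ) : IntervalIntegrable f volume a b := by
  refine IntervalIntegrable.mono_fun (g := f) (f := fun _ => B) intervalIntegrable_const
    hf.aestronglyMeasurable (ae_of_all _ fun x => ?_)
  simp only [Real.norm_eq_abs]
  exact (hB x).trans (le_abs_self B)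

theorem integral_cons_eq_sum (hH : Measurable H) (hB : ∀ x, |H x| ≤ B) (x : Fin n → ℝ)
    (a : ℕ → ℝ) (ha : a 0 = 0) (haM : a M = 1) :
    ∫ y in (0 : ℝ)..1, H (Fin.cons y x) = ∑ i ∈ Finset.range M,
      (∫ t in (0 : ℝ)..1, H (Fin.cons (a i + t * (a (i + 1) - a i)) x)) * (a (i + 1) - a i) := by
  have hint : ∀ u v : ℝ, IntervalIntegrable (fun y => H (Fin.cons y x)) volume u v :=
    intervalIntegrable_of_abs_le (hH.comp (measurable_cons x)) fun y => hB _
  have hadj := intervalIntegral.sum_integral_adjacent_intervals (n := M)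
    (fun i _ => hint (a i) (a (i + 1)))
  rw [ha, haM] at hadj
  rw [← hadj]
  refine Finset.sum_congr rfl fun i _ => ?_
  have h1 := intervalIntegral.smul_integral_comp_add_mul (a := 0) (b := 1)
    (fun y => H (Fin.cons y x)) (a (i + 1) - a i) (a i)
  rw [mul_zero, add_zero, mul_one, add_sub_cancel, smul_eq_mul] at h1
  rw [← h1, mul_comm]
  simp only [mul_comm]

/-- The variation along a good curve of an integral over the first variable. -/
theorem IsSteadyPartition.tame_integral (hX : IsGoodCurve φ F' X)
    (hθ : IsSteadyPartition (fun τ => complexEval φ (X τ))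
      (F.map (MvPolynomial.finSuccEquiv A n).toEquiv.toEmbedding) ρ M θ) (hρ : 0 < ρ) (hρ₁ : ρ ≤ 1)
    (hH0 : ∀ x, 0 ≤ H x) (hB : ∀ x, |H x| ≤ B) (hHm : Measurable H) {c K : ℝ}
    (hH : IsTame φ F c K H) {h : ℝ} (hh : |h| < ρ * min c 1) :
    |(∫ y in (0 : ℝ)..1, H (Fin.cons y (realPoint X h))) -
        ∫ y in (0 : ℝ)..1, H (Fin.cons y (realPoint X 0))| ≤
      (2 * K + 1) * (|h| / ρ) * ∫ y in (0 : ℝ)..1, H (Fin.cons y (realPoint X 0)) ∧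
    |(∫ y in (0 : ℝ)..1, H (Fin.cons y (realPoint X h))) +
        (∫ y in (0 : ℝ)..1, H (Fin.cons y (realPoint X (-h)))) -
        2 * ∫ y in (0 : ℝ)..1, H (Fin.cons y (realPoint X 0))| ≤
      (2 * K + 1) * (|h| / ρ) ^ 2 * ∫ y in (0 : ℝ)..1, H (Fin.cons y (realPoint X 0)) := by
  have hhρ : |h| < ρ := hh.trans_le (mul_le_of_le_one_right hρ.le (min_le_right _ _))
  have hhc : |h / ρ| < c := by
    rw [abs_div, abs_of_pos hρ, div_lt_iff₀ hρ, mul_comm]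
    exact hh.trans_le (mul_le_mul_of_nonneg_left (min_le_left _ _) hρ.le)
  have hx1 : |h| / ρ ≤ 1 := (div_le_one hρ).2 hhρ.le
  have hx0 : 0 ≤ |h| / ρ := by positivity
  have hmem : ∀ u : ℝ, |u| < ρ → (u : ℂ) ∈ ball (0 : ℂ) ρ := fun u hu => by simpa using hu
  let a : ℝ → ℕ → ℝ := fun u i => (θ i u).re
  let W : ℝ → ℕ → ℝ := fun u i => a u (i + 1) - a u i
  let J : ℝ → ℕ → ℝ → ℝ := fun u i t => H (Fin.cons (a u i + t * W u i) (realPoint X u))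
  let I : ℝ → ℕ → ℝ := fun u i => ∫ t in (0 : ℝ)..1, J u i t
  have hsum : ∀ u : ℝ, |u| < ρ → ∫ y in (0 : ℝ)..1, H (Fin.cons y (realPoint X u)) =
      ∑ i ∈ Finset.range M, I u i * W u i := fun u hu =>
    integral_cons_eq_sum hHm hB _ (a u) (by simp [a, hθ.first _ (hmem u hu)])
      (by simp [a, hθ.last _ (hmem u hu)])
  have hint : ∀ u i, IntervalIntegrable (J u i) volume 0 1 := fun u i => by
    refine intervalIntegrable_of_abs_le (hHm.comp ?_) (fun t => hB _) _ _
    exact (measurable_cons _).comp ((measurable_id.mul_const _).const_add _)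
  have hI0 : ∀ i, 0 ≤ I 0 i := fun i =>
    intervalIntegral.integral_nonneg zero_le_one fun t _ => hH0 _
  have hW0 : ∀ i < M, 0 ≤ W 0 i := fun i hi => by
    simpa [W, a] using (hθ.gap_pos i hi).le
  have hW0n : ∀ i < M, ‖θ (i + 1) 0 - θ i 0‖ = W 0 i := fun i hi => by
    have h0 : conj (θ (i + 1) 0 - θ i 0) = θ (i + 1) 0 - θ i 0 := by
      have h1 := hθ.map_conj i hi.le 0 (mem_ball_self hρ)
      have h2 := hθ.map_conj (i + 1) hi 0 (mem_ball_self hρ)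
      rw [map_zero] at h1 h2
      rw [map_sub, ← h1, ← h2]
    rw [← Complex.conj_eq_iff_re.1 h0, Complex.norm_real, Real.norm_eq_abs,
      abs_of_pos (hθ.gap_pos i hi)]
    simp [W, a]
  have hWd : ∀ i < M, ∀ u : ℝ, |u| < ρ → |W u i - W 0 i| ≤ 1 / 2 * (|u| / ρ) * W 0 i := by
    intro i hi u hu
    have h1 := (hθ.gap i hi).norm_sub_le (hmem u hu)
    rw [hW0n i hi, Complex.norm_real, Real.norm_eq_abs] at h1
    refine le_trans ?_ h1
    simpa [W, a] using Complex.abs_re_le_norm (θ (i + 1) u - θ i u - (θ (i + 1) 0 - θ i 0))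
  have hWdd : ∀ i < M, |W h i + W (-h) i - 2 * W 0 i| ≤ (|h| / ρ) ^ 2 * W 0 i := by
    intro i hi
    have h1 := (hθ.gap i hi).norm_second_diff_le (hmem h hhρ)
    rw [hW0n i hi, Complex.norm_real, Real.norm_eq_abs] at h1
    refine le_trans ?_ (h1.trans_eq (by ring))
    simpa [W, a] using Complex.abs_re_le_norm
      (θ (i + 1) h - θ i h + (θ (i + 1) (-h) - θ i (-h)) - 2 * (θ (i + 1) 0 - θ i 0))
  have hlift : ∀ i : ℕ, ∀ t u : ℝ, realPoint (fun τ => (Fin.cons (θ i (ρ * τ) +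
      t * (θ (i + 1) (ρ * τ) - θ i (ρ * τ))) (X (ρ * τ)) : Fin (n + 1) → ℂ)) (u / ρ) =
      Fin.cons (a u i + t * W u i) (realPoint X u) := by
    intro i t u
    have h1 : (ρ : ℂ) * ((u / ρ : ℝ) : ℂ) = u := by
      rw [← Complex.ofReal_mul, mul_div_cancel₀ _ hρ.ne']
    funext l
    simp only [realPoint, h1]
    refine Fin.cases ?_ (fun l => ?_) l
    · simp [a, W]
    · simp [realPoint]
  have hJd : ∀ i < M, ∀ u : ℝ, |u / ρ| < c → ∀ t ∈ Ioo (0 : ℝ) 1,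
      |J u i t - J 0 i t| ≤ K * (|u| / ρ) * J 0 i t := by
    intro i hi u hu t ht
    have h1 := hH.first _ (hθ.isGoodCurve_cons hX hρ hρ₁ hi ht) (u / ρ) hu
    rw [← zero_div ρ, hlift, hlift, abs_div, abs_of_pos hρ] at h1
    exact h1
  have hJdd : ∀ i < M, ∀ t ∈ Ioo (0 : ℝ) 1,
      |J h i t + J (-h) i t - 2 * J 0 i t| ≤ K * (|h| / ρ) ^ 2 * J 0 i t := by
    intro i hi t ht
    have h1 := hH.second _ (hθ.isGoodCurve_cons hX hρ hρ₁ hi ht) (h / ρ) hhc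
    rw [← zero_div ρ, ← neg_div, hlift, hlift, hlift, abs_div, abs_of_pos hρ] at h1
    exact h1
  have hId : ∀ i < M, ∀ u : ℝ, |u / ρ| < c → |I u i - I 0 i| ≤ K * (|u| / ρ) * I 0 i := by
    intro i hi u hu
    rw [← intervalIntegral.integral_sub (hint u i) (hint 0 i)]
    exact abs_intervalIntegral_le (hint 0 i) (hJd i hi u hu)
  have hIdd : ∀ i < M, |I h i + I (-h) i - 2 * I 0 i| ≤ K * (|h| / ρ) ^ 2 * I 0 i := by
    intro i hi
    rw [← intervalIntegral.integral_add (hint h i) (hint (-h) i),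
      ← intervalIntegral.integral_const_mul, ← intervalIntegral.integral_sub
        ((hint h i).add (hint (-h) i)) ((hint 0 i).const_mul 2)]
    exact abs_intervalIntegral_le (hint 0 i) (hJdd i hi)
  rw [hsum h hhρ, hsum (-h) (by rwa [abs_neg]), hsum 0 (by simpa using hρ)]
  constructor
  · rw [← Finset.sum_sub_distrib, Finset.mul_sum]
    refine (Finset.abs_sum_le_sum_abs _ _).trans (Finset.sum_le_sum fun i hi => ?_)
    have hi' := Finset.mem_range.1 hi
    exact abs_mul_sub_le hx1 (hI0 i) (hW0 i hi') (hId i hi' h hhc) (hWd i hi' h hhρ)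
  · rw [Finset.mul_sum, ← Finset.sum_add_distrib, ← Finset.sum_sub_distrib, Finset.mul_sum]
    refine (Finset.abs_sum_le_sum_abs _ _).trans (Finset.sum_le_sum fun i hi => ?_)
    have hi' := Finset.mem_range.1 hi
    have h1 := hId i hi' (-h) (by rwa [neg_div, abs_neg])
    have h2 := hWd i hi' (-h) (by rwa [abs_neg])
    rw [abs_neg] at h1 h2
    exact abs_mul_second_diff_le (hI0 i) (hId i hi' h hhc) h1 (hWd i hi' h hhρ) h2 (hW0 i hi')
      (hIdd i hi') (hWdd i hi')

theorem exists_isTame_integral [IsDomain A] (F : Finset (MvPolynomial (Fin (n + 1)) A))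
    (hF : (0 : MvPolynomial (Fin (n + 1)) A) ∉ F) :
    ∃ F' : Finset (MvPolynomial (Fin n) A), (0 : MvPolynomial (Fin n) A) ∉ F' ∧ ∃ ρ > 0,
      ∀ (φ : A →+* ℝ) (H : (Fin (n + 1) → ℝ) → ℝ) (c K B : ℝ), 0 ≤ K → (∀ x, 0 ≤ H x) →
        (∀ x, |H x| ≤ B) → Measurable H → IsTame φ F c K H →
        IsTame φ F' (ρ * min c 1) ((2 * K + 1) / ρ ^ 2)
          fun x => ∫ y in (0 : ℝ)..1, H (Fin.cons y x) := by
  obtain ⟨F', hF', ρ, hρ, hρ₁, hpart⟩ := exists_isSteadyPartition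
    (F.map (MvPolynomial.finSuccEquiv A n).toEquiv.toEmbedding) (by
      simp only [Finset.mem_map_equiv]
      simpa using hF)
  have hp : ∀ {φ : A →+* ℝ} {X : ℂ → Fin n → ℂ}, IsGoodCurve φ F' X → ∃ M θ,
      IsSteadyPartition (fun τ => complexEval φ (X τ))
        (F.map (MvPolynomial.finSuccEquiv A n).toEquiv.toEmbedding) ρ M θ := by
    intro φ X hX
    refine hpart _ _ hX.isHoloFamily fun f hf => ⟨fun h0 => ?_, hX.steady f hf⟩
    have h1 := hX.isHoloFamily.at_zero f
    rw [h0, Complex.ofReal_zero] at h1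
    exact hX.ne_zero f hf h1
  have hρ2 : ρ⁻¹ ≤ (ρ ^ 2)⁻¹ := inv_anti₀ (by positivity) (pow_le_of_le_one hρ.le hρ₁ two_ne_zero)
  refine ⟨F', hF', ρ, hρ, fun φ H c K B hK hH0 hB hHm hH => ⟨fun X hX h hh => ?_,
    fun X hX h hh => ?_⟩⟩
  · obtain ⟨M, θ, hθ⟩ := hp hX
    refine (hθ.tame_integral hX hρ hρ₁ hH0 hB hHm hH hh).1.trans ?_
    refine mul_le_mul_of_nonneg_right ?_
      (intervalIntegral.integral_nonneg zero_le_one fun t _ => hH0 _)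
    rw [div_eq_mul_inv, div_eq_mul_inv, mul_assoc, mul_comm |h|]
    gcongr
  · obtain ⟨M, θ, hθ⟩ := hp hX
    refine (hθ.tame_integral hX hρ hρ₁ hH0 hB hHm hH hh).2.trans (le_of_eq ?_)
    ring

end

theorem integrableOn_Icc_of_abs_le {m : ℕ} {f : (Fin m → ℝ) → ℝ} {B : ℝ} (hf : Measurable f)
    (hB : ∀ x, |f x| ≤ B) : IntegrableOn f (Icc 0 1) :=
  Measure.integrableOn_of_bounded (M := B) isCompact_Icc.measure_lt_top.ne hf.aestronglyMeasurable
    (ae_of_all _ hB)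

theorem integral_Icc_cons {m : ℕ} {f : (Fin (m + 1) → ℝ) → ℝ} {B : ℝ} (hf : Measurable f)
    (hB : ∀ x, |f x| ≤ B) :
    ∫ ξ in Icc (0 : Fin m → ℝ) 1, ∫ y in (0 : ℝ)..1, f (Fin.cons y ξ) =
      ∫ ξ in Icc (0 : Fin (m + 1) → ℝ) 1, f ξ := by
  have he := (volume_preserving_piFinSuccAbove (fun _ : Fin (m + 1) => ℝ) 0).symm
  have hpre : (MeasurableEquiv.piFinSuccAbove (fun _ : Fin (m + 1) => ℝ) 0).symm ⁻¹'
      Icc (0 : Fin (m + 1) → ℝ) 1 = Icc (0 : ℝ) 1 ×ˢ Icc (0 : Fin m → ℝ) 1 := by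
    ext ⟨y, ξ⟩
    simp [MeasurableEquiv.piFinSuccAbove, Pi.le_def, Fin.forall_fin_succ]
  have hint := integrableOn_Icc_of_abs_le hf hB
  rw [← he.setIntegral_preimage_emb (MeasurableEquiv.measurableEmbedding _), hpre]
  rw [← he.integrableOn_comp_preimage (MeasurableEquiv.measurableEmbedding _), hpre] at hint
  unfold IntegrableOn at hint
  rw [Measure.volume_eq_prod, ← Measure.prod_restrict] at hint ⊢
  have hsymm := integral_prod_symm _ hint
  simp only [Function.comp_apply] at hsymm
  rw [hsymm]
  refine integral_congr_ae (ae_of_all _ fun ξ => ?_)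
  simp only [intervalIntegral.integral_of_le zero_le_one, integral_Icc_eq_integral_Ioc]
  simp [MeasurableEquiv.piFinSuccAbove, Fin.consEquiv]

theorem measurable_integral_cons {m : ℕ} {f : (Fin (m + 1) → ℝ) → ℝ} (hf : Measurable f) :
    Measurable fun x : Fin m → ℝ => ∫ y in (0 : ℝ)..1, f (Fin.cons y x) := by
  simp only [intervalIntegral.integral_of_le zero_le_one]
  refine (StronglyMeasurable.integral_prod_right (f := fun (x : Fin m → ℝ) (y : ℝ) =>
    f (Fin.cons y x)) ?_).measurable
  refine (hf.comp (g := f) ?_).stronglyMeasurable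
  refine measurable_pi_iff.2 fun i => ?_
  refine Fin.cases ?_ (fun i => ?_) i
  · exact measurable_snd
  · exact (measurable_pi_apply i).comp measurable_fst

theorem abs_integral_cons_le {m : ℕ} {f : (Fin (m + 1) → ℝ) → ℝ} {B : ℝ} (hB : ∀ x, |f x| ≤ B)
    (x : Fin m → ℝ) : |∫ y in (0 : ℝ)..1, f (Fin.cons y x)| ≤ B := by
  have := intervalIntegral.norm_integral_le_of_norm_le_const (a := 0) (b := 1) (C := B)
    (f := fun y : ℝ => f (Fin.cons y x)) fun y _ => hB _
  simpa using this

theorem exists_isTame_integral_Icc {A : Type*} [CommRing A] [IsDomain A] (m : ℕ) :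
    ∀ (F : Finset (MvPolynomial (Fin (m + 1)) A)), (0 : MvPolynomial (Fin (m + 1)) A) ∉ F →
    ∀ c K : ℝ, 0 < c → 0 ≤ K →
    ∃ F' : Finset (MvPolynomial (Fin 1) A), (0 : MvPolynomial (Fin 1) A) ∉ F' ∧
      ∃ c' > 0, ∃ K' ≥ 0, ∀ (φ : A →+* ℝ) (H : (Fin (m + 1) → ℝ) → ℝ) (B : ℝ), (∀ x, 0 ≤ H x) →
        (∀ x, |H x| ≤ B) → Measurable H → IsTame φ F c K H →
        IsTame φ F' c' K' fun x => ∫ ξ in Icc (0 : Fin m → ℝ) 1,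
          H (Fin.snoc (α := fun _ => ℝ) ξ (x 0)) := by
  induction m with
  | zero =>
    intro F hF c K hc hK
    refine ⟨F, hF, c, hc, K, hK, fun φ H B hH0 hB hHm hH => ?_⟩
    convert hH using 2 with x
    have h1 : Icc (0 : Fin 0 → ℝ) 1 = univ := by
      ext x
      simp [Subsingleton.elim x 0, Subsingleton.elim (1 : Fin 0 → ℝ) 0]
    have h2 : ∀ ξ : Fin 0 → ℝ, Fin.snoc (α := fun _ => ℝ) ξ (x 0) = x := fun ξ => by
      funext i
      obtain rfl : i = 0 := Subsingleton.elim (α := Fin 1) i 0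
      rfl
    simp only [h2, h1, Measure.restrict_univ]
    simp [Measure.volume_pi_eq_dirac 0]
  | succ m ih =>
    intro F hF c K hc hK
    obtain ⟨F₁, hF₁, ρ, hρ, h1⟩ := exists_isTame_integral F hF
    obtain ⟨F', hF', c', hc', K', hK', h2⟩ := ih F₁ hF₁ (ρ * min c 1) ((2 * K + 1) / ρ ^ 2)
      (mul_pos hρ (lt_min hc one_pos)) (by positivity)
    refine ⟨F', hF', c', hc', K', hK', fun φ H B hH0 hB hHm hH => ?_⟩
    have h3 := h2 φ _ B
      (fun x => intervalIntegral.integral_nonneg zero_le_one fun t _ => hH0 (Fin.cons t x))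
      (abs_integral_cons_le hB) (measurable_integral_cons hHm) (h1 φ H c K B hK hH0 hB hHm hH)
    convert h3 using 2 with x
    rw [← integral_Icc_cons (f := fun ξ => H (Fin.snoc (α := fun _ => ℝ) ξ (x 0))) (B := B) ?_
      fun ξ => hB _]
    · simp only [Fin.cons_snoc_eq_snoc_cons]
    · refine hHm.comp (measurable_pi_iff.2 fun i => ?_)
      refine Fin.lastCases ?_ (fun i => ?_) i
      · simp
      · simpa using measurable_pi_apply i

theorem steady_prod_sub (t : ℂ) {δ : ℝ} (hδ : 0 ≤ δ) (Z : Multiset ℂ) :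
    (∀ z ∈ Z, δ ≤ ‖t - z‖) →
      Steady 1 (2 ^ Multiset.card Z - 1) fun τ => (Z.map fun z => t + δ * τ - z).prod := by
  induction Z using Multiset.induction_on with
  | empty =>
    intro _
    simpa using Steady.const 1 1
  | cons z Z ih =>
    intro h
    have h1 : Steady 1 1 fun τ => t + δ * τ - z := by
      refine ⟨by fun_prop, fun τ hτ => ?_⟩
      rw [mem_ball_zero_iff] at hτ
      have h2 : t + δ * τ - z - (t + δ * 0 - z) = δ * τ := by ring
      rw [h2, mul_zero, add_zero, norm_mul, Complex.norm_real, Real.norm_eq_abs, abs_of_nonneg hδ]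
      have := h z (Multiset.mem_cons_self _ _)
      nlinarith [norm_nonneg τ]
    have h3 := h1.mul (ih fun w hw => h w (Multiset.mem_cons_of_mem hw))
    simp only [Multiset.map_cons, Multiset.prod_cons, Multiset.card_cons]
    convert h3 using 1
    ring

theorem steady_eval (t : ℂ) {δ : ℝ} (hδ : 0 ≤ δ) {p : ℂ[X]} {N : ℕ} (hN : p.natDegree ≤ N)
    (h : ∀ z ∈ p.roots, δ ≤ ‖t - z‖) :
    Steady 1 (1 / 2) fun τ => p.eval (t + ((1 / 2 : ℝ) ^ (N + 1) * δ : ℝ) * τ) := by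
  have h1 := (Steady.const 1 p.leadingCoeff).mul (steady_prod_sub t hδ p.roots h)
  have h2 : (1 + 0) * (1 + (2 ^ Multiset.card p.roots - 1)) - 1 ≤ (2 : ℝ) ^ N := by
    have : (2 : ℝ) ^ Multiset.card p.roots ≤ 2 ^ N :=
      pow_le_pow_right₀ one_le_two ((card_roots' p).trans hN)
    linarith
  have h3 := ((h1.mono le_rfl h2).shrink one_pos (by positivity)
    (pow_le_one₀ (n := N + 1) (by norm_num) (by norm_num : (1 / 2 : ℝ) ≤ 1))).comp_mul
      (by positivity)
  have h4 : (1 / 2 : ℝ) ^ (N + 1) * 2 ^ N = 1 / 2 := by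
    rw [pow_succ, mul_right_comm, ← mul_pow]
    norm_num
  rw [h4] at h3
  refine h3.congr one_pos fun τ _ => ?_
  have := IsAlgClosed.splits p
  simp only [this.eval_eq_prod_roots]
  congr 2
  refine Multiset.map_congr rfl fun z _ => ?_
  push_cast
  ring

section

variable {A : Type*} [CommRing A]

/-- A polynomial in one variable, as a univariate polynomial. -/
noncomputable def toUnivariate : MvPolynomial (Fin 1) A ≃+* A[X] :=
  (MvPolynomial.finSuccEquiv A 0).toRingEquiv.trans
    (Polynomial.mapEquiv (MvPolynomial.isEmptyRingEquiv A (Fin 0)))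

theorem complexEval_const (φ : A →+* ℝ) (z : ℂ) (f : MvPolynomial (Fin 1) A) :
    complexEval φ (fun _ => z) f =
      ((toUnivariate f).map (Complex.ofRealHom.comp φ)).eval z := by
  have h : (fun _ : Fin 1 => z) = Fin.cons z (Fin.elim0 : Fin 0 → ℂ) := by
    funext i
    fin_cases i
    rfl
  rw [h, complexEval_cons, toUnivariate, RingEquiv.trans_apply, Polynomial.mapEquiv_apply,
    Polynomial.map_map]
  congr 2
  refine MvPolynomial.ringHom_ext (fun a => ?_) (fun i => i.elim0)
  have : MvPolynomial.isEmptyRingEquiv A (Fin 0) (MvPolynomial.C a) = a :=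
    (MvPolynomial.isEmptyAlgEquiv A (Fin 0)).commutes a
  simp [complexEval, this]

theorem isGoodCurve_segment {φ : A →+* ℝ} {F : Finset (MvPolynomial (Fin 1) A)} {N : ℕ}
    (hN : ∀ f ∈ F, (toUnivariate f).natDegree ≤ N)
    (h0 : ∀ f ∈ F, (toUnivariate f).map (Complex.ofRealHom.comp φ) ≠ 0) {t δ : ℝ} (hδ : 0 < δ)
    (h : ∀ f ∈ F, ∀ z ∈ ((toUnivariate f).map (Complex.ofRealHom.comp φ)).roots,
      δ ≤ ‖(t : ℂ) - z‖) :
    IsGoodCurve φ F fun τ _ => (t : ℂ) + ((1 / 2 : ℝ) ^ (N + 1) * δ : ℝ) * τ := by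
  refine ⟨fun i => by fun_prop, fun i τ _ => ?_, fun f hf => ?_, fun f hf => ?_⟩
  · rw [map_add, map_mul, Complex.conj_ofReal, Complex.conj_ofReal]
  · rw [complexEval_const, mul_zero, add_zero]
    intro h1
    have := h f hf t ((mem_roots (h0 f hf)).2 h1)
    rw [sub_self, norm_zero] at this
    linarith
  · simp only [complexEval_const]
    exact steady_eval t hδ.le ((natDegree_map_le).trans (hN f hf)) (h f hf)

theorem abs_second_diff_le {φ : A →+* ℝ} {F : Finset (MvPolynomial (Fin 1) A)} {N : ℕ} {c K : ℝ}
    (hc : 0 < c) (hK : 0 ≤ K)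
    (hN : ∀ f ∈ F, (toUnivariate f).natDegree ≤ N)
    (h0 : ∀ f ∈ F, (toUnivariate f).map (Complex.ofRealHom.comp φ) ≠ 0)
    {Z : Multiset ℂ} (hZ : Z ≠ 0)
    (hFZ : ∀ f ∈ F, ∀ z ∈ ((toUnivariate f).map (Complex.ofRealHom.comp φ)).roots, z ∈ Z)
    {ε δ₀ : ℝ} (hε : ε = (1 / 2) ^ (N + 1)) (hδ₀ : δ₀ = 1 / (2 * ε * c))
    {G : ℝ → ℝ} {S : ℝ} (hG : ∀ t, 0 ≤ G t) (hGS : ∀ t, G t ≤ S)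
    (hT : IsTame φ F c K fun x => G (x 0)) (t : ℝ) :
    |G (t + 1 / 2) + G (t - 1 / 2) - 2 * G t| ≤
      (2 * (1 + δ₀ ^ 2) + K / (4 * ε ^ 2) * (1 + 1 / δ₀ ^ 2)) * S *
        (Z.map fun z => (1 + (t - z.re) ^ 2)⁻¹).sum := by
  classical
  have hεp : 0 < ε := by rw [hε]; positivity
  have hδp : 0 < δ₀ := by rw [hδ₀]; positivity
  have hS : 0 ≤ S := (hG t).trans (hGS t)
  obtain ⟨z, hz, hmin⟩ := Z.toFinset.exists_min_image (fun z => ‖(t : ℂ) - z‖)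
    (Multiset.toFinset_nonempty.2 hZ)
  rw [Multiset.mem_toFinset] at hz
  replace hmin : ∀ w ∈ Z, ‖(t : ℂ) - z‖ ≤ ‖(t : ℂ) - w‖ := fun w hw =>
    hmin w (Multiset.mem_toFinset.2 hw)
  set δ := ‖(t : ℂ) - z‖ with hδ
  have hre : (t - z.re) ^ 2 ≤ δ ^ 2 := by
    rw [← sq_abs]
    have := Complex.abs_re_le_norm ((t : ℂ) - z)
    simp only [Complex.sub_re, Complex.ofReal_re] at this
    gcongr
  have hsum : (1 + δ ^ 2)⁻¹ ≤ (Z.map fun z => (1 + (t - z.re) ^ 2)⁻¹).sum := by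
    refine le_trans ?_ (Multiset.single_le_sum (fun x hx => ?_) _
      (Multiset.mem_map_of_mem (fun z : ℂ => (1 + (t - z.re) ^ 2)⁻¹) hz))
    · gcongr
    · obtain ⟨w, _, rfl⟩ := Multiset.mem_map.1 hx
      positivity
  refine le_trans ?_ (mul_le_mul_of_nonneg_left hsum (by positivity))
  rw [← div_eq_mul_inv, le_div_iff₀ (by positivity)]
  rcases le_or_gt δ δ₀ with hle | hlt
  · have h1 : |G (t + 1 / 2) + G (t - 1 / 2) - 2 * G t| ≤ 2 * S := by
      rw [abs_le]
      constructor <;> linarith [hG (t + 1 / 2), hG (t - 1 / 2), hG t, hGS (t + 1 / 2),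
        hGS (t - 1 / 2), hGS t]
    calc _ ≤ 2 * S * (1 + δ₀ ^ 2) := by gcongr
      _ ≤ _ := by
        have : 0 ≤ K / (4 * ε ^ 2) * (1 + 1 / δ₀ ^ 2) * S := by positivity
        linarith
  · have hδpos : 0 < δ := hδp.trans hlt
    have h1 := isGoodCurve_segment hN h0 hδpos fun f hf w hw => hmin w (hFZ f hf w hw)
    rw [← hε] at h1
    have h2 := hT.second _ h1 (1 / (2 * ε * δ)) (by
      rw [abs_of_pos (by positivity), div_lt_iff₀ (by positivity)]
      rw [hδ₀, div_lt_iff₀ (by positivity)] at hlt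
      linarith)
    have h3 : ε * δ * (1 / (2 * ε * δ)) = 1 / 2 := by field_simp
    simp only [realPoint, Complex.add_re, Complex.re_ofReal_mul, Complex.ofReal_re, 
      mul_zero, add_zero, mul_neg, h3, ← sub_eq_add_neg] at h2
    rw [sq_abs] at h2
    have h4 : 1 + δ ^ 2 ≤ (1 + 1 / δ₀ ^ 2) * δ ^ 2 := by
      have : 1 ≤ 1 / δ₀ ^ 2 * δ ^ 2 := by
        rw [div_mul_eq_mul_div, one_mul, le_div_iff₀ (by positivity), one_mul]
        gcongr
      linarith
    calc _ ≤ K * (1 / (2 * ε * δ)) ^ 2 * S * ((1 + 1 / δ₀ ^ 2) * δ ^ 2) := by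
          gcongr
          exact h2.trans (by gcongr; exact hGS t)
      _ = K / (4 * ε ^ 2) * (1 + 1 / δ₀ ^ 2) * S := by field_simp; ring
      _ ≤ _ := by
        have : 0 ≤ 2 * (1 + δ₀ ^ 2) * S := by positivity
        linarith

theorem integrable_sum_inv_one_add_sq (Z : Multiset ℂ) :
    Integrable (fun t : ℝ => (Z.map fun z => (1 + (t - z.re) ^ 2)⁻¹).sum) ∧
      ∫ t : ℝ, (Z.map fun z => (1 + (t - z.re) ^ 2)⁻¹).sum = Multiset.card Z * π := by
  induction Z using Multiset.induction_on with
  | empty => simp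
  | cons z Z ih =>
    have h := integrable_inv_one_add_sq.comp_sub_right z.re
    simp only [Multiset.map_cons, Multiset.sum_cons, Multiset.card_cons]
    refine ⟨h.add ih.1, ?_⟩
    rw [integral_add h ih.1, ih.2,
      integral_sub_right_eq_self (fun t : ℝ => (1 + t ^ 2)⁻¹), integral_univ_inv_one_add_sq]
    push_cast
    ring

theorem exists_second_diff_bound [IsDomain A] (F : Finset (MvPolynomial (Fin 1) A))
    (hF : (0 : MvPolynomial (Fin 1) A) ∉ F) {c K : ℝ} (hc : 0 < c) (hK : 0 ≤ K) :
    ∃ w : A, w ≠ 0 ∧ ∃ C ≥ 0, ∀ φ : A →+* ℝ, φ w ≠ 0 → ∀ (G : ℝ → ℝ) (S : ℝ),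
      (∀ t, 0 ≤ G t) → (∀ t, G t ≤ S) → IsTame φ F c K (fun x => G (x 0)) →
      ∃ b : ℝ → ℝ, Integrable b ∧ (∀ t, |G (t + 1 / 2) + G (t - 1 / 2) - 2 * G t| ≤ b t) ∧
        ∫ t, b t ≤ C * S := by
  classical
  set N := 1 + ∑ f ∈ F, (toUnivariate f).natDegree with hN
  obtain ⟨ε, hε⟩ : ∃ ε : ℝ, ε = (1 / 2) ^ (N + 1) := ⟨_, rfl⟩
  obtain ⟨δ₀, hδ₀⟩ : ∃ δ₀ : ℝ, δ₀ = 1 / (2 * ε * c) := ⟨_, rfl⟩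
  have hne : ∀ f ∈ F, toUnivariate f ≠ 0 := fun f hf h =>
    hF (((map_eq_zero_iff _ toUnivariate.injective).1 h) ▸ hf)
  refine ⟨∏ f ∈ F, (toUnivariate f).leadingCoeff, Finset.prod_ne_zero_iff.2 fun f hf =>
    leadingCoeff_ne_zero.2 (hne f hf),
    (2 * (1 + δ₀ ^ 2) + K / (4 * ε ^ 2) * (1 + 1 / δ₀ ^ 2)) * (N * π), by positivity,
    fun φ hφ G S hG hGS hT => ?_⟩
  have h0 : ∀ f ∈ F, (toUnivariate f).map (Complex.ofRealHom.comp φ) ≠ 0 := fun f hf h => by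
    rw [map_prod, Finset.prod_ne_zero_iff] at hφ
    have := congrArg (fun p => p.coeff (toUnivariate f).natDegree) h
    simp only [coeff_map, RingHom.comp_apply, coeff_zero] at this
    exact hφ f hf (by simpa using this)
  set P : ℂ[X] := X * ∏ f ∈ F, (toUnivariate f).map (Complex.ofRealHom.comp φ) with hP
  have hP0 : P ≠ 0 := mul_ne_zero X_ne_zero (Finset.prod_ne_zero_iff.2 h0)
  have hcard : Multiset.card P.roots ≤ N := by
    refine (card_roots' P).trans (natDegree_mul_le.trans ?_)
    rw [natDegree_X, hN]
    gcongr
    exact (natDegree_prod_le _ _).trans (Finset.sum_le_sum fun f _ => natDegree_map_le)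
  have hZ : P.roots ≠ 0 := fun h => by
    have : (0 : ℂ) ∈ P.roots := (mem_roots hP0).2 (by simp [hP])
    rw [h] at this
    simp at this
  have hroots : ∀ f ∈ F, ∀ z ∈ ((toUnivariate f).map (Complex.ofRealHom.comp φ)).roots,
      z ∈ P.roots := fun f hf z hz => by
    rw [mem_roots hP0]
    refine IsRoot.dvd (isRoot_of_mem_roots hz) ?_
    exact (Finset.dvd_prod_of_mem _ hf).mul_left X
  have hdeg : ∀ f ∈ F, (toUnivariate f).natDegree ≤ N := fun f hf =>
    (Finset.single_le_sum (f := fun f => (toUnivariate f).natDegree)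
      (fun _ _ => Nat.zero_le _) hf).trans (Nat.le_add_left _ _)
  have hS : 0 ≤ S := (hG 0).trans (hGS 0)
  obtain ⟨hint, hval⟩ := integrable_sum_inv_one_add_sq P.roots
  refine ⟨_, hint.const_mul _,
    abs_second_diff_le hc hK hdeg h0 hZ hroots hε hδ₀ hG hGS hT, ?_⟩
  rw [integral_const_mul, hval, mul_right_comm]
  have : (Multiset.card P.roots : ℝ) ≤ N := by exact_mod_cast hcard
  have hεp : 0 < ε := by rw [hε]; positivity
  gcongr

end

/-- The character `t ↦ e(t) = exp(2πit)`. -/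
noncomputable def phase (t : ℝ) : ℂ := Complex.exp (2 * Real.pi * Complex.I * t)

theorem phase_add (s t : ℝ) : phase (s + t) = phase s * phase t := by
  rw [phase, phase, phase, ← Complex.exp_add]
  push_cast
  ring_nf

theorem phase_half : phase (1 / 2) = -1 := by
  rw [phase, ← Complex.exp_pi_mul_I]
  push_cast
  ring_nf

theorem phase_add_half (t : ℝ) : phase (t + 1 / 2) = -phase t := by
  rw [phase_add, phase_half, mul_neg_one]

theorem phase_sub_half (t : ℝ) : phase (t - 1 / 2) = -phase t := by
  have := phase_add_half (t - 1 / 2)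
  rw [sub_add_cancel] at this
  rw [this, neg_neg]

theorem norm_phase (t : ℝ) : ‖phase t‖ = 1 := by
  rw [phase, show (2 * Real.pi * Complex.I * t : ℂ) = ((2 * Real.pi * t : ℝ) : ℂ) * Complex.I by
    push_cast; ring]
  exact Complex.norm_exp_ofReal_mul_I _

theorem hasDerivAt_phase (t : ℝ) :
    HasDerivAt phase (2 * Real.pi * Complex.I * phase t) t := by
  have := ((hasDerivAt_id t).ofReal_comp.const_mul (2 * Real.pi * Complex.I)).cexp
  simp only [id, Complex.ofReal_one, mul_one] at this
  rw [mul_comm]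
  exact this

theorem continuous_phase : Continuous phase := by
  unfold phase
  fun_prop

theorem norm_phase_sub_le (s t : ℝ) : ‖phase s - phase t‖ ≤ 2 * π * |s - t| := by
  have := convex_univ.norm_image_sub_le_of_norm_hasDerivWithin_le (f := phase) (C := 2 * π)
    (fun x _ => (hasDerivAt_phase x).hasDerivWithinAt) (fun x _ => by
      simp [norm_phase, abs_of_pos pi_pos]) (mem_univ t) (mem_univ s)
  rwa [Real.norm_eq_abs] at this

theorem integral_phase_window (a : ℝ) :
    ∫ t in Icc (a - 1 / 2) a, phase t = phase a / (π * Complex.I) := by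
  rw [integral_Icc_eq_integral_Ioc, ← intervalIntegral.integral_of_le (by linarith)]
  have hne : (2 * Real.pi * Complex.I : ℂ) ≠ 0 := by simp [pi_ne_zero]
  have h : ∀ t, HasDerivAt (fun t => phase t / (2 * Real.pi * Complex.I)) (phase t) t := fun t => by
    have := (hasDerivAt_phase t).div_const (2 * Real.pi * Complex.I)
    rwa [mul_div_cancel_left₀ _ hne] at this
  rw [intervalIntegral.integral_eq_sub_of_hasDerivAt (fun t _ => h t)
    (continuous_phase.intervalIntegrable _ _), phase_sub_half]
  have : (π : ℂ) ≠ 0 := by simp [pi_ne_zero]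
  field_simp
  ring

section

variable {Ω : Type*} [MeasurableSpace Ω] {μ : Measure Ω} {q : Ω → ℝ}

theorem measurableSet_window (hq : Measurable q) :
    MeasurableSet {p : ℝ × Ω | p.1 ≤ q p.2 ∧ q p.2 ≤ p.1 + 1 / 2} :=
  (measurableSet_le measurable_fst (hq.comp measurable_snd)).inter
    (measurableSet_le (hq.comp measurable_snd) (measurable_fst.add_const _))

theorem integral_window_right (hq : Measurable q) (t : ℝ) :
    ∫ ω, {p : ℝ × Ω | p.1 ≤ q p.2 ∧ q p.2 ≤ p.1 + 1 / 2}.indicator (fun p => phase p.1) (t, ω) ∂μ =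
      μ.real {ω | t ≤ q ω ∧ q ω ≤ t + 1 / 2} * phase t := by
  have h : ∀ ω, {p : ℝ × Ω | p.1 ≤ q p.2 ∧ q p.2 ≤ p.1 + 1 / 2}.indicator
      (fun p => phase p.1) (t, ω) =
      {ω | t ≤ q ω ∧ q ω ≤ t + 1 / 2}.indicator (fun _ => phase t) ω := fun ω => by
    simp [indicator_apply]
  simp only [h]
  have hs : MeasurableSet {ω | t ≤ q ω ∧ q ω ≤ t + 1 / 2} :=
    (measurableSet_le measurable_const hq).inter (measurableSet_le hq measurable_const)
  rw [integral_indicator_const _ hs, Complex.real_smul]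

variable [IsFiniteMeasure μ]

theorem integrable_window (hq : Measurable q) :
    Integrable ({p : ℝ × Ω | p.1 ≤ q p.2 ∧ q p.2 ≤ p.1 + 1 / 2}.indicator fun p => phase p.1)
      ((volume : Measure ℝ).prod μ) := by
  have hm : StronglyMeasurable
      ({p : ℝ × Ω | p.1 ≤ q p.2 ∧ q p.2 ≤ p.1 + 1 / 2}.indicator fun p => phase p.1) :=
    ((continuous_phase.measurable.comp measurable_fst).indicator
      (measurableSet_window hq)).stronglyMeasurable
  refine (integrable_indicator_iff (measurableSet_window hq)).2 ?_
  refine Measure.integrableOn_of_bounded (M := 1) ?_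
    (continuous_phase.measurable.comp measurable_fst).aestronglyMeasurable
    (ae_of_all _ fun p => (norm_phase _).le)
  rw [Measure.prod_apply_symm (measurableSet_window hq)]
  have : ∀ ω, (volume : Measure ℝ)
      ((fun t => (t, ω)) ⁻¹' {p : ℝ × Ω | p.1 ≤ q p.2 ∧ q p.2 ≤ p.1 + 1 / 2}) =
        ENNReal.ofReal (1 / 2) := fun ω => by
    have h : (fun t => (t, ω)) ⁻¹' {p : ℝ × Ω | p.1 ≤ q p.2 ∧ q p.2 ≤ p.1 + 1 / 2} =
        Icc (q ω - 1 / 2) (q ω) := by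
      ext t
      simp only [mem_preimage, mem_ofPred_eq, mem_Icc, tsub_le_iff_right]
      exact and_comm
    rw [h, Real.volume_Icc]
    congr 1
    ring
  simp only [this, lintegral_const]
  exact (ENNReal.mul_lt_top ENNReal.ofReal_lt_top (measure_lt_top _ _)).ne

theorem integrable_window_mul_phase (hq : Measurable q) :
    Integrable fun t => (μ.real {ω | t ≤ q ω ∧ q ω ≤ t + 1 / 2} : ℂ) * phase t := by
  have := (integrable_window (μ := μ) hq).integral_prod_left
  simpa only [integral_window_right hq] using this

theorem integral_window_mul_phase (hq : Measurable q) :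
    ∫ t, (μ.real {ω | t ≤ q ω ∧ q ω ≤ t + 1 / 2} : ℂ) * phase t =
      (∫ ω, phase (q ω) ∂μ) / (π * Complex.I) := by
  have := integral_integral_swap (f := fun t ω =>
    {p : ℝ × Ω | p.1 ≤ q p.2 ∧ q p.2 ≤ p.1 + 1 / 2}.indicator (fun p => phase p.1) (t, ω))
    (integrable_window (μ := μ) hq)
  simp only [integral_window_right hq] at this
  rw [this, ← integral_div]
  congr 1
  funext ω
  rw [← integral_phase_window, ← integral_indicator measurableSet_Icc]
  congr 1
  funext t
  simp only [indicator_apply, mem_ofPred_eq, mem_Icc, tsub_le_iff_right]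
  simp only [and_comm]

theorem norm_integral_phase_le (hq : Measurable q) {b : ℝ → ℝ} (hb : Integrable b)
    (h : ∀ t, |μ.real {ω | t + 1 / 2 ≤ q ω ∧ q ω ≤ t + 1 / 2 + 1 / 2} +
      μ.real {ω | t - 1 / 2 ≤ q ω ∧ q ω ≤ t - 1 / 2 + 1 / 2} -
      2 * μ.real {ω | t ≤ q ω ∧ q ω ≤ t + 1 / 2}| ≤ b t) :
    ‖∫ ω, phase (q ω) ∂μ‖ ≤ π / 4 * ∫ t, b t := by
  set g : ℝ → ℝ := fun t => μ.real {ω | t ≤ q ω ∧ q ω ≤ t + 1 / 2} with hg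
  have hgi : Integrable fun t => (g t : ℂ) * phase t := integrable_window_mul_phase hq
  have hgv : ∫ t, (g t : ℂ) * phase t = (∫ ω, phase (q ω) ∂μ) / (π * Complex.I) :=
    integral_window_mul_phase hq
  have key : ∫ t, ((g (t + 1 / 2) + g (t - 1 / 2) - 2 * g t : ℝ) : ℂ) * phase t =
      -4 * ∫ t, (g t : ℂ) * phase t := by
    have e1 : ∀ t, ((g (t + 1 / 2) + g (t - 1 / 2) - 2 * g t : ℝ) : ℂ) * phase t =
        (-1) * (g (t + 1 / 2) * phase (t + 1 / 2)) + (-1) * (g (t - 1 / 2) * phase (t - 1 / 2)) +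
          (-2) * (g t * phase t) := fun t => by
      rw [phase_add_half, phase_sub_half]
      push_cast
      ring
    have i1 := hgi.comp_add_right (1 / 2)
    have i2 := hgi.comp_sub_right (1 / 2)
    have i3 : Integrable fun t => (-1 : ℂ) * (g (t + 1 / 2) * phase (t + 1 / 2)) +
        (-1) * (g (t - 1 / 2) * phase (t - 1 / 2)) := (i1.const_mul (-1)).add (i2.const_mul (-1))
    simp only [e1]
    rw [integral_add i3 (hgi.const_mul (-2)),
      integral_add (i1.const_mul (-1)) (i2.const_mul (-1)),
      integral_const_mul, integral_const_mul, integral_const_mul,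
      integral_add_right_eq_self (fun t => (g t : ℂ) * phase t),
      integral_sub_right_eq_self (fun t => (g t : ℂ) * phase t)]
    ring
  have h1 : ‖∫ t, ((g (t + 1 / 2) + g (t - 1 / 2) - 2 * g t : ℝ) : ℂ) * phase t‖ ≤ ∫ t, b t :=
    norm_integral_le_of_norm_le hb (ae_of_all _ fun t => by
      rw [norm_mul, norm_phase, mul_one, Complex.norm_real]
      exact h t)
  rw [key, hgv, norm_mul, norm_div, norm_mul, Complex.norm_I, Complex.norm_real, mul_one,
    Real.norm_of_nonneg pi_pos.le, norm_neg] at h1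
  norm_num at h1
  rw [mul_div_assoc', div_le_iff₀ pi_pos] at h1
  linarith

end

section

section

variable {A : Type*} [CommRing A] {n : ℕ} {φ : A →+* ℝ} {F : Finset (MvPolynomial (Fin n) A)}
  {X : ℂ → Fin n → ℂ} {f g : MvPolynomial (Fin n) A} {h : ℝ}

theorem IsGoodCurve.abs_sub_lt (hX : IsGoodCurve φ F X) (hf : f ∈ F) (hh : |h| < 1) :
    |MvPolynomial.eval₂Hom φ (realPoint X h) f - MvPolynomial.eval₂Hom φ (realPoint X 0) f| <
      |MvPolynomial.eval₂Hom φ (realPoint X 0) f| := by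
  have h0 := complexEval_ofReal φ (realPoint X 0) f
  have h1 := complexEval_ofReal φ (realPoint X h) f
  rw [hX.ofReal_realPoint hh] at h1
  rw [hX.ofReal_realPoint (h := 0) (by simp), Complex.ofReal_zero] at h0
  have h2 := (hX.steady f hf).bound h (by simpa using hh)
  have h3 := norm_pos_iff.2 (hX.ne_zero f hf)
  rw [h1, h0, ← Complex.ofReal_sub, Complex.norm_real, Complex.norm_real, Real.norm_eq_abs,
    Real.norm_eq_abs] at h2
  rw [h0, Complex.norm_real, Real.norm_eq_abs] at h3
  linarith

theorem IsGoodCurve.nonneg_iff (hX : IsGoodCurve φ F X) (hf : f ∈ F) (hh : |h| < 1) :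
    0 ≤ MvPolynomial.eval₂Hom φ (realPoint X h) f ↔
      0 ≤ MvPolynomial.eval₂Hom φ (realPoint X 0) f := by
  have h1 := hX.abs_sub_lt hf hh
  rw [abs_lt] at h1
  constructor <;> intro h2 <;> by_contra! h3
  · rw [abs_of_neg h3] at h1
    linarith
  · rw [abs_of_nonneg h2] at h1
    linarith

theorem IsGoodCurve.nonpos_iff (hX : IsGoodCurve φ F X) (hf : f ∈ F) (hh : |h| < 1) :
    MvPolynomial.eval₂Hom φ (realPoint X h) f ≤ 0 ↔
      MvPolynomial.eval₂Hom φ (realPoint X 0) f ≤ 0 := by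
  have h1 := hX.abs_sub_lt hf hh
  rw [abs_lt] at h1
  constructor <;> intro h2 <;> by_contra! h3
  · rw [abs_of_pos h3] at h1
    linarith
  · rw [abs_of_nonpos h2] at h1
    linarith

theorem isTame_indicator (φ : A →+* ℝ) (hf : f ∈ F) (hg : g ∈ F) :
    IsTame φ F 1 0 ({x | 0 ≤ MvPolynomial.eval₂Hom φ x f ∧
      MvPolynomial.eval₂Hom φ x g ≤ 0}.indicator fun _ => (1 : ℝ)) := by
  have key : ∀ X, IsGoodCurve φ F X → ∀ h : ℝ, |h| < 1 →
      {x | 0 ≤ MvPolynomial.eval₂Hom φ x f ∧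
        MvPolynomial.eval₂Hom φ x g ≤ 0}.indicator (fun _ => (1 : ℝ)) (realPoint X h) =
      {x | 0 ≤ MvPolynomial.eval₂Hom φ x f ∧
        MvPolynomial.eval₂Hom φ x g ≤ 0}.indicator (fun _ => (1 : ℝ)) (realPoint X 0) :=
    fun X hX h hh => by
      simp only [indicator_apply, mem_ofPred_eq, hX.nonneg_iff hf hh, hX.nonpos_iff hg hh]
  refine ⟨fun X hX h hh => ?_, fun X hX h hh => ?_⟩
  · rw [key X hX h hh]
    simp
  · rw [key X hX h hh, key X hX (-h) (by rwa [abs_neg])]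
    simp [two_mul]

end

variable {d : ℕ}

instance isFiniteMeasure_restrict_Icc :
    IsFiniteMeasure ((volume : Measure (Fin d → ℝ)).restrict (Icc 0 1)) :=
  isFiniteMeasure_restrict.2 isCompact_Icc.measure_lt_top.ne

/-- The polynomial function with monomials in `s` and coefficients `c`. -/
def polyFun (s : Finset (Fin d →₀ ℕ)) (c : (Fin d →₀ ℕ) → ℝ) (ξ : Fin d → ℝ) : ℝ :=
  ∑ m ∈ s, c m * ∏ i, ξ i ^ m i

theorem continuous_polyFun (s : Finset (Fin d →₀ ℕ)) (c : (Fin d →₀ ℕ) → ℝ) :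
    Continuous (polyFun s c) := by
  unfold polyFun
  fun_prop

/-- The generic polynomial with monomials in `s`, minus a last variable and a constant `a`. -/
noncomputable def genericPoly (s : Finset (Fin d →₀ ℕ)) (a : ℝ) :
    MvPolynomial (Fin (d + 1)) (MvPolynomial (Fin d →₀ ℕ) ℝ) :=
  ∑ m ∈ s, MvPolynomial.C (MvPolynomial.X m) * ∏ i, MvPolynomial.X (Fin.castSucc i) ^ m i -
    MvPolynomial.X (Fin.last d) - MvPolynomial.C (MvPolynomial.C a)

theorem eval_genericPoly (s : Finset (Fin d →₀ ℕ)) (a : ℝ) (c : (Fin d →₀ ℕ) → ℝ)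
    (x : Fin (d + 1) → ℝ) :
    MvPolynomial.eval₂Hom (MvPolynomial.eval c) x (genericPoly s a) =
      polyFun s c (fun i => x (Fin.castSucc i)) - x (Fin.last d) - a := by
  simp [genericPoly, polyFun, MvPolynomial.eval₂_sum, MvPolynomial.eval₂_prod]

theorem genericPoly_ne_zero (s : Finset (Fin d →₀ ℕ)) (a : ℝ) : genericPoly s a ≠ 0 := fun h => by
  have := eval_genericPoly s a 0 fun _ => 1 - a
  rw [h, map_zero] at this
  simp [polyFun] at this

theorem exists_generic_bound (s : Finset (Fin d →₀ ℕ)) :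
    ∃ w : MvPolynomial (Fin d →₀ ℕ) ℝ, w ≠ 0 ∧ ∃ C ≥ 0, ∀ c, MvPolynomial.eval c w ≠ 0 →
      ∀ S, (∀ t, (volume.restrict (Icc (0 : Fin d → ℝ) 1)).real
        {ξ | t ≤ polyFun s c ξ ∧ polyFun s c ξ ≤ t + 1 / 2} ≤ S) →
      ‖∫ ξ in Icc (0 : Fin d → ℝ) 1, phase (polyFun s c ξ)‖ ≤ C * S := by
  classical
  obtain ⟨F, hF, c₀, hc₀, K, hK, htame⟩ := exists_isTame_integral_Icc d
    {genericPoly s 0, genericPoly s (1 / 2)} (by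
      simp [(genericPoly_ne_zero s _).symm]) 1 0 one_pos le_rfl
  obtain ⟨w, hw, C, hC, hbound⟩ := exists_second_diff_bound F hF hc₀ hK
  refine ⟨w, hw, π / 4 * C, by positivity, fun c hc S hS => ?_⟩
  set R : Set (Fin (d + 1) → ℝ) :=
    {x | 0 ≤ MvPolynomial.eval₂Hom (MvPolynomial.eval c) x (genericPoly s 0) ∧
      MvPolynomial.eval₂Hom (MvPolynomial.eval c) x (genericPoly s (1 / 2)) ≤ 0} with hR
  have hcont : ∀ a, Continuous fun x : Fin (d + 1) → ℝ =>
      MvPolynomial.eval₂Hom (MvPolynomial.eval c) x (genericPoly s a) := fun a => by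
    simp only [eval_genericPoly]
    have := (continuous_polyFun s c).comp
      (by fun_prop : Continuous fun (x : Fin (d + 1) → ℝ) (i : Fin d) => x (Fin.castSucc i))
    simp only [Function.comp_def] at this
    fun_prop
  have hRm : MeasurableSet R :=
    ((isClosed_le continuous_const (hcont 0)).inter
      (isClosed_le (hcont (1 / 2)) continuous_const)).measurableSet
  have hT := htame (MvPolynomial.eval c) (R.indicator fun _ => 1) 1
    (fun x => indicator_nonneg (fun _ _ => zero_le_one) _)
    (fun x => by
      rw [indicator_apply]
      split_ifs <;> simp)
    (measurable_const.indicator hRm) (isTame_indicator _ (by simp) (by simp))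
  have hG : ∀ t : ℝ, ∫ ξ in Icc (0 : Fin d → ℝ) 1,
      R.indicator (fun _ => (1 : ℝ)) (Fin.snoc (α := fun _ => ℝ) ξ t) =
      (volume.restrict (Icc (0 : Fin d → ℝ) 1)).real
        {ξ | t ≤ polyFun s c ξ ∧ polyFun s c ξ ≤ t + 1 / 2} := fun t => by
    have h1 : ∀ ξ : Fin d → ℝ, R.indicator (fun _ => (1 : ℝ)) (Fin.snoc (α := fun _ => ℝ) ξ t) =
        {ξ | t ≤ polyFun s c ξ ∧ polyFun s c ξ ≤ t + 1 / 2}.indicator (fun _ => (1 : ℝ)) ξ :=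
      fun ξ => by
        simp only [indicator_apply, hR, mem_ofPred_eq, eval_genericPoly, Fin.snoc_castSucc,
          Fin.snoc_last, sub_zero, sub_nonneg, tsub_le_iff_right, zero_add]
        simp only [add_comm]
    have h2 : MeasurableSet {ξ | t ≤ polyFun s c ξ ∧ polyFun s c ξ ≤ t + 1 / 2} :=
      ((isClosed_le continuous_const (continuous_polyFun s c)).inter
        (isClosed_le (continuous_polyFun s c) continuous_const)).measurableSet
    simp only [h1]
    rw [integral_indicator_const _ h2, smul_eq_mul, mul_one]
  simp only [hG] at hT
  obtain ⟨b, hb, hb1, hb2⟩ := hbound (MvPolynomial.eval c) hc _ S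
    (fun t => measureReal_nonneg) hS hT
  refine (norm_integral_phase_le (continuous_polyFun s c).measurable hb hb1).trans ?_
  rw [mul_assoc]
  gcongr

theorem exists_eval_ne_zero {ι : Type*} {w : MvPolynomial ι ℝ} (hw : w ≠ 0) (c : ι → ℝ) {η : ℝ}
    (hη : 0 < η) : ∃ c' : ι → ℝ, (∀ i, |c' i - c i| ≤ η) ∧ MvPolynomial.eval c' w ≠ 0 := by
  by_contra! h
  refine hw (MvPolynomial.funext_set (fun i => Icc (c i - η) (c i + η))
    (fun i => Icc_infinite (by linarith)) fun x hx => ?_)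
  rw [map_zero]
  refine h x fun i => ?_
  have := hx i (mem_univ i)
  rw [abs_le]
  constructor <;> linarith [this.1, this.2]

theorem abs_polyFun_sub_le (s : Finset (Fin d →₀ ℕ)) {c c' : (Fin d →₀ ℕ) → ℝ} {η : ℝ}
    (h : ∀ m, |c' m - c m| ≤ η) {ξ : Fin d → ℝ} (hξ : ξ ∈ Icc (0 : Fin d → ℝ) 1) :
    |polyFun s c' ξ - polyFun s c ξ| ≤ s.card * η := by
  rw [polyFun, polyFun, ← Finset.sum_sub_distrib]
  refine (Finset.abs_sum_le_sum_abs _ _).trans ?_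
  rw [← nsmul_eq_mul]
  refine Finset.sum_le_card_nsmul _ _ _ fun m _ => ?_
  have h1 : |∏ i, ξ i ^ m i| ≤ 1 := by
    rw [abs_of_nonneg (Finset.prod_nonneg fun i _ => pow_nonneg (hξ.1 i) _)]
    exact Finset.prod_le_one (fun i _ => pow_nonneg (hξ.1 i) _)
      fun i _ => pow_le_one₀ (hξ.1 i) (hξ.2 i)
  rw [← sub_mul, abs_mul]
  exact (mul_le_of_le_one_right (abs_nonneg _) h1).trans (h m)

theorem exists_bound (s : Finset (Fin d →₀ ℕ)) :
    ∃ C : ℝ, 0 ≤ C ∧ ∀ c, ∀ S, (∀ t, (volume.restrict (Icc (0 : Fin d → ℝ) 1)).real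
        {ξ | t ≤ polyFun s c ξ ∧ polyFun s c ξ ≤ t + 1} ≤ S) →
      ‖∫ ξ in Icc (0 : Fin d → ℝ) 1, phase (polyFun s c ξ)‖ ≤ C * S := by
  obtain ⟨w, hw, C, hC, hbound⟩ := exists_generic_bound s
  refine ⟨C, hC, fun c S hS => ?_⟩
  refine le_of_forall_pos_le_add fun ε hε => ?_
  obtain ⟨η, hη, hη1, hη2⟩ : ∃ η : ℝ, 0 < η ∧ s.card * η ≤ 1 / 4 ∧
      2 * π * (s.card * η) ≤ ε := by
    refine ⟨min (1 / 4) (ε / (2 * π)) / (s.card + 1), by positivity, ?_, ?_⟩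
    all_goals
      have h1 : (s.card : ℝ) * (min (1 / 4) (ε / (2 * π)) / (s.card + 1)) ≤
          min (1 / 4) (ε / (2 * π)) := by
        rw [mul_div_assoc', div_le_iff₀ (by positivity)]
        have : 0 < min (1 / 4) (ε / (2 * π)) := by positivity
        nlinarith
    · exact h1.trans (min_le_left _ _)
    · have := h1.trans (min_le_right _ _)
      rw [le_div_iff₀ (by positivity)] at this
      linarith
  obtain ⟨c', hc', hne⟩ := exists_eval_ne_zero hw c hη
  have hd : ∀ ξ ∈ Icc (0 : Fin d → ℝ) 1, |polyFun s c' ξ - polyFun s c ξ| ≤ s.card * η :=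
    fun ξ hξ => abs_polyFun_sub_le s hc' hξ
  have h1 := hbound c' hne S fun t => by
    refine le_trans ?_ (hS (t - 1 / 4))
    simp only [measureReal_def]
    refine ENNReal.toReal_mono (measure_ne_top _ _) ?_
    rw [Measure.restrict_apply' measurableSet_Icc, Measure.restrict_apply' measurableSet_Icc]
    refine measure_mono fun ξ hξ => ⟨?_, hξ.2⟩
    have h2 := abs_le.1 ((hd ξ hξ.2).trans hη1)
    obtain ⟨h3, h4⟩ := hξ.1
    constructor <;> linarith [h2.1, h2.2]
  have hint : ∀ c, IntegrableOn (fun ξ => phase (polyFun s c ξ)) (Icc (0 : Fin d → ℝ) 1) := fun c =>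
    (continuous_phase.comp (continuous_polyFun s c)).continuousOn.integrableOn_compact isCompact_Icc
  have h2 : ‖(∫ ξ in Icc (0 : Fin d → ℝ) 1, phase (polyFun s c ξ)) -
      ∫ ξ in Icc (0 : Fin d → ℝ) 1, phase (polyFun s c' ξ)‖ ≤ ε := by
    rw [← integral_sub (hint c) (hint c')]
    have h3 := norm_setIntegral_le_of_norm_le_const (μ := volume) (s := Icc (0 : Fin d → ℝ) 1)
      (f := fun ξ => phase (polyFun s c ξ) - phase (polyFun s c' ξ)) (C := ε)
      isCompact_Icc.measure_lt_top fun ξ hξ => by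
        refine (norm_phase_sub_le _ _).trans (le_trans ?_ hη2)
        rw [abs_sub_comm]
        gcongr
        exact hd ξ hξ
    have h4 : volume.real (Icc (0 : Fin d → ℝ) 1) = 1 := by
      simp [measureReal_def, Real.volume_Icc_pi]
    rwa [h4, mul_one] at h3
  have h5 := norm_le_norm_add_norm_sub' (∫ ξ in Icc (0 : Fin d → ℝ) 1, phase (polyFun s c ξ))
    (∫ ξ in Icc (0 : Fin d → ℝ) 1, phase (polyFun s c' ξ))
  linarith

end

end StationarySet

/-- **Stationary set estimate** (Theorem 1.1, polynomial case).
For all `d ≥ 1` and `k ≥ 1` there is a constant `C = C(d,k)` such that for every real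
polynomial `Q` in `d` variables of total degree at most `k`,
`|∫_{[0,1]^d} e(Q(ξ)) dξ| ≤ C · sup_{μ ∈ ℝ} |{ξ ∈ [0,1]^d : μ ≤ Q(ξ) ≤ μ + 1}|`,
where `e(t) = exp(2πit)` and `|·|` is Lebesgue measure. -/
theorem stationary_set_estimate (d k : ℕ) (hd : 1 ≤ d) (hk : 1 ≤ k) :
    ∃ C : ℝ, 0 ≤ C ∧
      ∀ Q : MvPolynomial (Fin d) ℝ, Q.totalDegree ≤ k →
        ‖∫ ξ in Icc (0 : Fin d → ℝ) 1,
            Complex.exp (2 * Real.pi * Complex.I * (MvPolynomial.eval ξ Q))‖ ≤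
          C * (⨆ μ : ℝ, volume {ξ ∈ Icc (0 : Fin d → ℝ) 1 |
              μ ≤ MvPolynomial.eval ξ Q ∧ MvPolynomial.eval ξ Q ≤ μ + 1}).toReal := by
  obtain ⟨C, hC, h⟩ :=
    StationarySet.exists_bound (Finset.Icc 0 (Finsupp.equivFunOnFinite.symm fun _ : Fin d => k))
  refine ⟨C, hC, fun Q hQ => ?_⟩
  have hQ' : ∀ ξ, MvPolynomial.eval ξ Q =
      StationarySet.polyFun (Finset.Icc 0 (Finsupp.equivFunOnFinite.symm fun _ : Fin d => k))
        (fun m => Q.coeff m) ξ := fun ξ => by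
    rw [MvPolynomial.eval_eq', StationarySet.polyFun]
    refine Finset.sum_subset (fun m hm => ?_) fun m _ hm => ?_
    · rw [Finset.mem_Icc]
      refine ⟨zero_le, fun i => ?_⟩
      refine le_trans ?_ ((MvPolynomial.le_totalDegree hm).trans hQ)
      rw [Finsupp.sum_fintype _ _ fun _ => rfl]
      exact Finset.single_le_sum (f := fun i => m i) (fun _ _ => Nat.zero_le _) (Finset.mem_univ i)
    · rw [MvPolynomial.notMem_support_iff.1 hm, zero_mul]
  simp only [hQ']
  refine h _ _ fun t => ?_
  rw [measureReal_def, Measure.restrict_apply' measurableSet_Icc]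
  refine ENNReal.toReal_mono (ne_top_of_le_ne_top (isCompact_Icc.measure_lt_top
    (μ := volume) (K := Icc (0 : Fin d → ℝ) 1)).ne
    (iSup_le fun μ => measure_mono (sep_subset _ _))) ?_
  rw [inter_comm]
  exact le_iSup (fun μ : ℝ => volume {ξ ∈ Icc (0 : Fin d → ℝ) 1 | μ ≤ StationarySet.polyFun _ _ ξ ∧
    StationarySet.polyFun _ _ ξ ≤ μ + 1}) t
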